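/- Let n ≥ 1 and k = ⌈n/2⌉. Then the lattice-point counting functions of the dilates satisfy lim_{m→∞} |m·B_n(132,312) ∩ ℤ^{n×n}| / m^{binom(n,2)} = (∏_{i=1}^{n−1} (i−1)!) / (∏_{i=1}^{n−1} (2i−1)!), and lim_{m→∞} |m·B̃_n(123) ∩ ℤ^{n×n}| / m^{binom(k,2)} = 1 / ∏_{i=1}^{k−1} (2i−1)^{k−i}. Equivalently, the normalized volume of B_n(132,312) is binom(n,2)!·∏_{i=1}^{n−1}(i−1)!/∏_{i=1}^{n−1}(2i−1)!, and the normalized volume of B̃_n(123) is binom(k,2)!/∏_{i=1}^{k−1}(2i−1)^{k−i}. -/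

import Mathlib

open Pointwise

/-- `σ` contains the pattern `π`. -/
def containsPattern {n k : ℕ} (σ : Equiv.Perm (Fin n)) (π : Equiv.Perm (Fin k)) : Prop :=
  ∃ f : Fin k → Fin n, StrictMono f ∧ ∀ a b : Fin k, σ (f a) < σ (f b) ↔ π a < π b

/-- The pattern 123. -/
def p123 : Equiv.Perm (Fin 3) := 1
/-- The pattern 132. -/
def p132 : Equiv.Perm (Fin 3) := Equiv.swap 1 2
/-- The pattern 312. -/
def p312 : Equiv.Perm (Fin 3) := (finRotate 3)⁻¹

/-- `Av_n(132,312)`. -/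
def Av132312 (n : ℕ) : Set (Equiv.Perm (Fin n)) :=
  {σ : Equiv.Perm (Fin n) | ¬ containsPattern σ p132 ∧ ¬ containsPattern σ p312}

/-- `σ` is alternating (up-down): zero-based, `σ(j) < σ(j+1)` for even `j` and
`σ(j) > σ(j+1)` for odd `j`. -/
def Alternating {n : ℕ} (σ : Equiv.Perm (Fin n)) : Prop :=
  ∀ (j : ℕ) (h : j + 1 < n),
    (Even j → σ ⟨j, by omega⟩ < σ ⟨j + 1, h⟩) ∧
    (Odd j → σ ⟨j + 1, h⟩ < σ ⟨j, by omega⟩)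

/-- `AltAv_n(123)`: alternating permutations avoiding 123. -/
def AltAv123 (n : ℕ) : Set (Equiv.Perm (Fin n)) :=
  {σ : Equiv.Perm (Fin n) | Alternating σ ∧ ¬ containsPattern σ p123}

/-- The permutation matrix of `σ`, viewed as a vector in `ℝ^{n×n}`. -/
def permMatrix {n : ℕ} (σ : Equiv.Perm (Fin n)) : Fin n × Fin n → ℝ :=
  fun p => if σ p.1 = p.2 then 1 else 0

/-- `B_n(132,312)`. -/
def B132312 (n : ℕ) : Set (Fin n × Fin n → ℝ) :=
  convexHull ℝ (permMatrix '' Av132312 n)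

/-- `B̃_n(123)`. -/
def Balt123 (n : ℕ) : Set (Fin n × Fin n → ℝ) :=
  convexHull ℝ (permMatrix '' AltAv123 n)

/-!
Both polytopes are images of order polytopes of staircase posets under affine maps that match the
vertices (the 0/1 fillings of the staircase) with the permutation matrices and whose inverse is
integral. Every prefix of a permutation avoiding `132` and `312` fills an interval, and recording
where the intervals start gives an order ideal of the shifted staircase. In an alternating
permutation avoiding `123` the peaks and the valleys decrease, and counting the valleys above each
peak gives an order ideal of the ordinary staircase.

An integral point of the `m`-th dilate of an order polytope is an antitone filling of the poset by
`0, …, m`. Almost all of these are injective, and deleting the cell with the smallest label shows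
that their leading coefficient `w I`, as a function of the order ideal `I`, satisfies
`|I| * w I = ∑ w (I \ {x})` over the maximal cells `x` of `I`. For shifted shapes Schur's product
formula solves this recursion, by Lagrange interpolation; for ordinary shapes Aitken's determinant
solves it, and on the staircase the determinant is a Vandermonde determinant.
-/

open Filter Topology

namespace AvoidingBirkhoff

lemma descFactorial_succ_succ_eq_add (m d : ℕ) : (m + 1).descFactorial (d + 1) =
    m.descFactorial (d + 1) + (d + 1) * m.descFactorial d := by
  rw [Nat.succ_descFactorial_succ, Nat.descFactorial_succ, ← add_mul]
  rcases le_or_gt d m with h | h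
  · congr 1
    omega
  · simp [Nat.descFactorial_of_lt h]

section Fillings

variable {α : Type*} {R : α → α → Prop} {D I J : Finset α} {m : ℕ}

/-- The cells `x ∈ I` with no `R`-successor in `I`. -/
noncomputable def maximalCells (R : α → α → Prop) (I : Finset α) : Finset α := by
  classical exact {x ∈ I | ∀ y ∈ I, ¬ R x y}

/-- `I` is an order ideal for the relation `R`, which is read as a set of cover relations `x < y`
and need not be transitive. -/
def IsOrderIdeal (R : α → α → Prop) (I : Finset α) : Prop :=
  ∀ ⦃x y⦄, R x y → y ∈ I → x ∈ I

/-- The `R`-antitone fillings of the cells of `D` by `0, …, m - 1`, extended by zero outside `D`. -/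
def antitoneFillings (R : α → α → Prop) (D : Finset α) (m : ℕ) : Set (α → ℕ) :=
  {t | (∀ x ∉ D, t x = 0) ∧ (∀ x ∈ D, t x < m) ∧ ∀ ⦃x y⦄, R x y → t y ≤ t x}

/-- The `R`-antitone fillings of `D` by distinct values among `0, …, m - 1`; for `m = |D|` these are
the linear extensions of `D`, read backwards. -/
def injectiveFillings (R : α → α → Prop) (D : Finset α) (m : ℕ) : Set (α → ℕ) :=
  {t ∈ antitoneFillings R D m | Set.InjOn t D}

@[simp]
lemma mem_maximalCells {x : α} : x ∈ maximalCells R I ↔ x ∈ I ∧ ∀ y ∈ I, ¬ R x y := by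
  simp [maximalCells]

lemma eqOn_of_mem_antitoneFillings {t t' : α → ℕ} (ht : t ∈ antitoneFillings R D m)
    (ht' : t' ∈ antitoneFillings R D m) (h : ∀ x ∈ D, t x = t' x) : t = t' := by
  funext x
  by_cases hx : x ∈ D
  · exact h x hx
  · rw [ht.1 x hx, ht'.1 x hx]

lemma finite_antitoneFillings : (antitoneFillings R D m).Finite := by
  refine Set.Finite.of_finite_image (f := fun t (x : D) => t x) ?_ ?_
  · refine (Set.Finite.pi fun _ : D => Set.finite_Iio m).subset ?_
    rintro _ ⟨t, ht, rfl⟩ x -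
    exact ht.2.1 x x.2
  · intro t ht t' ht' h
    exact eqOn_of_mem_antitoneFillings ht ht' fun x hx => congrFun h ⟨x, hx⟩

lemma finite_injectiveFillings : (injectiveFillings R D m).Finite :=
  finite_antitoneFillings.subset fun _ => And.left

lemma injectiveFillings_empty : injectiveFillings R ∅ m = {0} := by
  ext t
  simp +contextual [injectiveFillings, antitoneFillings, funext_iff]

lemma injectiveFillings_zero (hI : I.Nonempty) : injectiveFillings R I 0 = ∅ := by
  obtain ⟨x, hx⟩ := hI
  exact Set.eq_empty_of_forall_notMem fun t ht => Nat.not_lt_zero _ (ht.1.2.1 x hx)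

/-- The cells at which `t` does not vanish. -/
noncomputable def positiveCells (I : Finset α) (t : α → ℕ) : Finset α := {x ∈ I | t x ≠ 0}

lemma mem_positiveCells_iff {t : α → ℕ} (ht : t ∈ antitoneFillings R I m) {x : α} :
    x ∈ positiveCells I t ↔ t x ≠ 0 := by
  simp only [positiveCells, Finset.mem_filter, and_iff_right_iff_imp]
  exact fun h => by_contra fun hx => h (ht.1 x hx)

lemma ncard_not_injective {β : Type*} [Fintype β] (m : ℕ) :
    {g : β → Fin m | ¬ Function.Injective g}.ncard + m.descFactorial (Fintype.card β) =
      m ^ Fintype.card β := by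
  classical
  have hinj : {g : β → Fin m | Function.Injective g}.ncard = m.descFactorial (Fintype.card β) := by
    have hcongr := Nat.card_congr (Equiv.subtypeInjectiveEquivEmbedding β (Fin m))
    rwa [Nat.card_eq_fintype_card (α := β ↪ Fin m), Fintype.card_embedding_eq,
      Fintype.card_fin] at hcongr
  have hcompl := Set.ncard_add_ncard_compl {g : β → Fin m | Function.Injective g}
  rw [hinj, add_comm, Nat.card_eq_fintype_card, Fintype.card_fun, Fintype.card_fin] at hcompl
  exact hcompl

lemma ncard_not_injOn_le (R : α → α → Prop) (D : Finset α) (m : ℕ) :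
    {t ∈ antitoneFillings R D m | ¬ Set.InjOn t D}.ncard + m.descFactorial D.card ≤
      m ^ D.card := by
  have hrestrict : {t ∈ antitoneFillings R D m | ¬ Set.InjOn t D}.ncard ≤
      {g : D → Fin m | ¬ Function.Injective g}.ncard := by
    classical
    let extend (g : D → Fin m) (x : α) : ℕ := if h : x ∈ D then g ⟨x, h⟩ else 0
    refine le_trans (Set.ncard_le_ncard (t := extend '' _) ?_) (Set.ncard_image_le (f := extend))
    rintro t ⟨ht, hinj⟩
    refine ⟨fun x => ⟨t x, ht.2.1 x x.2⟩, fun h => hinj ?_, ?_⟩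
    · intro x hx y hy hxy
      exact congrArg Subtype.val (@h ⟨x, hx⟩ ⟨y, hy⟩ (Fin.ext hxy))
    · funext x
      by_cases hx : x ∈ D
      · simp [extend, hx]
      · simp [extend, hx, ht.1 x hx]
  have hcard := ncard_not_injective (β := D) m
  rw [Fintype.card_coe] at hcard
  omega

variable [DecidableEq α]

lemma IsOrderIdeal.erase (hI : IsOrderIdeal R I) {x : α}
    (hx : x ∈ maximalCells R I) : IsOrderIdeal R (I.erase x) := by
  intro a b hab hb
  rw [Finset.mem_erase] at hb ⊢
  refine ⟨?_, hI hab hb.2⟩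
  rintro rfl
  exact (mem_maximalCells.1 hx).2 b hb.2 hab

lemma positiveCells_eq_erase [Std.Irrefl R] {t : α → ℕ}
    (ht : t ∈ injectiveFillings R I m) {x : α} (hx : x ∈ I) (h0 : t x = 0) :
    x ∈ maximalCells R I ∧ positiveCells I t = I.erase x := by
  refine ⟨mem_maximalCells.2 ⟨hx, fun y hy hxy => ?_⟩, ?_⟩
  · have hty : t y = t x := by have := ht.1.2.2 hxy; omega
    exact irrefl x (ht.2 hy hx hty ▸ hxy)
  · ext y
    simp only [positiveCells, Finset.mem_filter, Finset.mem_erase]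
    refine ⟨fun h => ⟨fun hyx => h.2 (hyx ▸ h0), h.1⟩, fun h => ⟨h.2, fun hty => h.1 ?_⟩⟩
    exact ht.2 h.2 hx (hty.trans h0.symm)

lemma positiveCells_mem [Std.Irrefl R] {t : α → ℕ}
    (ht : t ∈ injectiveFillings R I m) :
    positiveCells I t ∈ insert I ((maximalCells R I).image I.erase) := by
  by_cases h : ∀ x ∈ I, t x ≠ 0
  · exact Finset.mem_insert.2 (.inl (Finset.filter_true_of_mem h))
  · push Not at h
    obtain ⟨x, hx, h0⟩ := h
    obtain ⟨hmax, heq⟩ := positiveCells_eq_erase ht hx h0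
    exact Finset.mem_insert_of_mem (Finset.mem_image.2 ⟨x, hmax, heq.symm⟩)

/-- Adds one on the cells of `J`. -/
def raiseOn (J : Finset α) (t : α → ℕ) (x : α) : ℕ := if x ∈ J then t x + 1 else 0

lemma raiseOn_mem_injectiveFillings (hJ : IsOrderIdeal R J) (hJI : J ⊆ I)
    (hsub : ((I \ J : Finset α) : Set α).Subsingleton) {t : α → ℕ}
    (ht : t ∈ injectiveFillings R J m) : raiseOn J t ∈ injectiveFillings R I (m + 1) := by
  refine ⟨⟨fun x hx => if_neg fun h => hx (hJI h), fun x _ => ?_, fun x y hxy => ?_⟩, ?_⟩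
  · unfold raiseOn
    split_ifs with hx
    · have := ht.1.2.1 x hx
      omega
    · omega
  · by_cases hy : y ∈ J
    · simpa [raiseOn, hy, hJ hxy hy] using ht.1.2.2 hxy
    · simp [raiseOn, hy]
  · intro x hx y hy hxy
    by_cases hxJ : x ∈ J <;> by_cases hyJ : y ∈ J
    · exact ht.2 hxJ hyJ (by simpa [raiseOn, hxJ, hyJ] using hxy)
    · simp [raiseOn, hxJ, hyJ] at hxy
    · simp [raiseOn, hxJ, hyJ] at hxy
    · exact hsub (Finset.mem_coe.2 (Finset.mem_sdiff.2 ⟨hx, hxJ⟩))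
        (Finset.mem_coe.2 (Finset.mem_sdiff.2 ⟨hy, hyJ⟩))

lemma bijOn_raiseOn (hJ : IsOrderIdeal R J) (hJI : J ⊆ I)
    (hsub : ((I \ J : Finset α) : Set α).Subsingleton) :
    Set.BijOn (raiseOn J) (injectiveFillings R J m)
      {t ∈ injectiveFillings R I (m + 1) | positiveCells I t = J} := by
  refine ⟨fun t ht => ⟨raiseOn_mem_injectiveFillings hJ hJI hsub ht, ?_⟩, ?_, ?_⟩
  · ext x
    simpa [positiveCells, raiseOn] using @hJI x
  · refine fun t ht t' ht' h => eqOn_of_mem_antitoneFillings ht.1 ht'.1 fun x hx => ?_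
    simpa [raiseOn, hx] using congrFun h x
  · rintro t ⟨ht, rfl⟩
    have hpos (x) : x ∈ positiveCells I t ↔ t x ≠ 0 := mem_positiveCells_iff ht.1
    refine ⟨fun x => t x - 1, ⟨⟨fun x hx => ?_, fun x hx => ?_, fun x y hxy => ?_⟩, ?_⟩, ?_⟩
    · simp [not_not.1 (mt (hpos x).2 hx)]
    · have := ht.1.2.1 x (hJI hx)
      have := (hpos x).1 hx
      exact (Nat.sub_lt_iff_lt_add' (by omega)).2 (by omega)
    · exact Nat.sub_le_sub_right (ht.1.2.2 hxy) 1
    · intro x hx y hy hxy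
      have := (hpos x).1 hx
      have := (hpos y).1 hy
      exact ht.2 (hJI hx) (hJI hy) (by simp only at hxy; omega)
    · funext x
      by_cases hx : t x = 0
      · simp [raiseOn, hpos, hx]
      · simp [raiseOn, hpos, hx, Nat.sub_add_cancel (Nat.pos_of_ne_zero hx)]

lemma ncard_injectiveFillings_succ [Std.Irrefl R] (hI : IsOrderIdeal R I) :
    (injectiveFillings R I (m + 1)).ncard = (injectiveFillings R I m).ncard +
      ∑ x ∈ maximalCells R I, (injectiveFillings R (I.erase x) m).ncard := by
  have hfin := finite_injectiveFillings (R := R) (D := I) (m := m + 1)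
  have hfiber {J : Finset α} (hJ : IsOrderIdeal R J) (hJI : J ⊆ I)
      (hsub : ((I \ J : Finset α) : Set α).Subsingleton) :
      Finset.card {t ∈ hfin.toFinset | positiveCells I t = J} =
        (injectiveFillings R J m).ncard := by
    rw [(bijOn_raiseOn hJ hJI hsub).ncard_eq, ← Set.ncard_coe_finset]
    simp
  have hmem {x} (hx : x ∈ maximalCells R I) : x ∈ I := (mem_maximalCells.1 hx).1
  have hnotMem : I ∉ (maximalCells R I).image I.erase := by
    rw [Finset.mem_image]
    rintro ⟨x, hx, h⟩
    exact Finset.notMem_erase x I (h.symm ▸ hmem hx)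
  rw [Set.ncard_eq_toFinset_card _ hfin, Finset.card_eq_sum_card_fiberwise (f := positiveCells I)
    fun t ht => positiveCells_mem (hfin.mem_toFinset.1 ht), Finset.sum_insert hnotMem,
    Finset.sum_image (I.erase_injOn.mono fun x => hmem), hfiber hI subset_rfl (by simp)]
  congr 1
  refine Finset.sum_congr rfl fun x hx => hfiber (hI.erase hx) (Finset.erase_subset x I) ?_
  rw [Finset.sdiff_erase_self (hmem hx), Finset.coe_singleton]
  exact Set.subsingleton_singleton

/-- A weight on the order ideals of `D` obeying the recursion of the volumes `e(I) / |I|!` of order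
polytopes, where `e` counts linear extensions. -/
def IsOrderVolume (R : α → α → Prop) (D : Finset α) (w : Finset α → ℝ) : Prop :=
  w ∅ = 1 ∧ ∀ I ⊆ D, IsOrderIdeal R I →
    (I.card : ℝ) * w I = ∑ x ∈ maximalCells R I, w (I.erase x)

lemma IsOrderVolume.ncard_injectiveFillings [Std.Irrefl R] {w : Finset α → ℝ}
    (hw : IsOrderVolume R D w) (m : ℕ) (hID : I ⊆ D) (hI : IsOrderIdeal R I) :
    ((injectiveFillings R I m).ncard : ℝ) = m.descFactorial I.card * w I := by
  induction m generalizing I with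
  | zero =>
    rcases I.eq_empty_or_nonempty with rfl | hne
    · simp [injectiveFillings_empty, hw.1]
    · simp [injectiveFillings_zero hne, hne]
  | succ m ih =>
    have herase : ∑ x ∈ maximalCells R I, ((injectiveFillings R (I.erase x) m).ncard : ℝ) =
        m.descFactorial (I.card - 1) * (I.card * w I) := by
      rw [hw.2 I hID hI, Finset.mul_sum]
      refine Finset.sum_congr rfl fun x hx => ?_
      rw [ih ((I.erase_subset x).trans hID) (hI.erase hx),
        Finset.card_erase_of_mem (mem_maximalCells.1 hx).1]
    rw [ncard_injectiveFillings_succ hI]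
    push_cast
    rw [ih hID hI, herase]
    rcases I.card with - | d
    · simp
    · rw [descFactorial_succ_succ_eq_add]
      push_cast [Nat.add_sub_cancel]
      ring

/-- Only `O(m ^ (|D| - 1))` fillings fail to be injective, so injective ones give the limit. -/
lemma IsOrderVolume.tendsto_ncard_antitoneFillings [Std.Irrefl R]
    {w : Finset α → ℝ} (hw : IsOrderVolume R D w) (hD : IsOrderIdeal R D) :
    Tendsto (fun m : ℕ => ((antitoneFillings R D m).ncard : ℝ) / (m : ℝ) ^ D.card) atTop
      (𝓝 (w D)) := by
  have hdesc : Tendsto (fun m : ℕ => (m.descFactorial D.card : ℝ) / (m : ℝ) ^ D.card) atTop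
      (𝓝 1) := by
    refine (Asymptotics.isEquivalent_iff_tendsto_one ?_).1 (isEquivalent_descFactorial D.card)
    filter_upwards [eventually_gt_atTop 0] with m hm
    positivity
  have hlower : Tendsto (fun m : ℕ => (m.descFactorial D.card : ℝ) / (m : ℝ) ^ D.card * w D) atTop
      (𝓝 (w D)) := by simpa using hdesc.mul_const (w D)
  have hupper := hlower.add (hdesc.const_sub 1)
  simp only [sub_self, add_zero] at hupper
  have hsplit (m : ℕ) : ((antitoneFillings R D m).ncard : ℝ) = m.descFactorial D.card * w D +
      {t ∈ antitoneFillings R D m | ¬ Set.InjOn t D}.ncard := by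
    rw [← hw.ncard_injectiveFillings m subset_rfl hD, ← Nat.cast_add, ←
      Set.ncard_inter_add_ncard_sdiff_eq_ncard _ {t | Set.InjOn t D} finite_antitoneFillings]
    rfl
  have hrest (m : ℕ) : ({t ∈ antitoneFillings R D m | ¬ Set.InjOn t D}.ncard : ℝ) ≤
      (m : ℝ) ^ D.card - m.descFactorial D.card :=
    le_sub_iff_add_le.2 (mod_cast ncard_not_injOn_le R D m)
  refine tendsto_of_tendsto_of_tendsto_of_le_of_le' hlower hupper (.of_forall fun m => ?_) ?_
  · rw [hsplit, add_div, mul_div_right_comm]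
    exact le_add_of_nonneg_right (by positivity)
  · filter_upwards [eventually_gt_atTop 0] with m hm
    have hpow : (0 : ℝ) < (m : ℝ) ^ D.card := by positivity
    rw [hsplit, add_div, mul_div_right_comm, add_le_add_iff_left, div_le_iff₀ hpow, sub_mul,
      div_mul_cancel₀ _ hpow.ne', one_mul]
    exact hrest m

lemma IsOrderVolume.tendsto_ncard_antitoneFillings_succ [Std.Irrefl R]
    {w : Finset α → ℝ} (hw : IsOrderVolume R D w) (hD : IsOrderIdeal R D) :
    Tendsto (fun m : ℕ => ((antitoneFillings R D (m + 1)).ncard : ℝ) / (m : ℝ) ^ D.card) atTop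
      (𝓝 (w D)) := by
  have hratio : Tendsto (fun m : ℕ => (((m + 1 : ℕ) : ℝ) / m) ^ D.card) atTop (𝓝 1) := by
    have hinv := (tendsto_natCast_div_add_atTop (1 : ℝ)).inv₀ one_ne_zero
    simpa using hinv.pow D.card
  have hshift := (tendsto_add_atTop_iff_nat 1).2 (hw.tendsto_ncard_antitoneFillings hD)
  refine (one_mul (w D) ▸ hratio.mul hshift).congr fun m => ?_
  rw [div_pow, div_mul_div_comm, mul_comm, mul_div_mul_right _ _ (by positivity)]

end Fillings

section LatticePoints

variable {α X : Type*} {R : α → α → Prop} {D : Finset α} {V : Set (X → ℝ)}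
  {M : (ℝ × (α → ℝ)) →ₗ[ℝ] (X → ℝ)} {m : ℕ}

/-- The real points `t ∈ [0, 1]^D` that are `R`-antitone, extended by zero outside `D`: the order
polytope of `D`. -/
def orderPolytope (R : α → α → Prop) (D : Finset α) : Set (α → ℝ) :=
  {t | (∀ x ∉ D, t x = 0) ∧ (∀ x ∈ D, t x ∈ Set.Icc 0 1) ∧ ∀ ⦃x y⦄, R x y → t y ≤ t x}

/-- The affine map `t ↦ M (1, t)`, homogenized so that `M (m, t)` describes the `m`-th dilate, sends
the vertices of the order polytope of `D` onto the integral points `V`, and a filling can be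
recovered from its image by integral linear combinations. -/
structure IsLatticeModel (R : α → α → Prop) (D : Finset α) (V : Set (X → ℝ))
    (M : (ℝ × (α → ℝ)) →ₗ[ℝ] (X → ℝ)) : Prop where
  image_eq : (fun t : α → ℕ => M (1, fun x => (t x : ℝ))) '' antitoneFillings R D 2 = V
  integral : ∀ v ∈ V, ∀ p, ∃ z : ℤ, (z : ℝ) = v p
  -- The subgroups `⊥` and `ℤ` give injectivity and integrality of preimages.
  mem_of_apply_mem : ∀ (A : AddSubgroup ℝ), ∀ a ∈ A, ∀ t : α → ℝ, (∀ x ∉ D, t x = 0) →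
    (∀ p, M (a, t) p ∈ A) → ∀ x, t x ∈ A

lemma cast_mem_orderPolytope {t : α → ℕ} (ht : t ∈ antitoneFillings R D 2) :
    (fun x => (t x : ℝ)) ∈ orderPolytope R D := by
  refine ⟨fun x hx => by simp [ht.1 x hx], fun x hx => ⟨by positivity, ?_⟩, fun x y hxy => ?_⟩
  · exact Nat.cast_le_one.2 (Nat.lt_succ_iff.1 (ht.2.1 x hx))
  · exact Nat.cast_le.2 (ht.2.2 hxy)

lemma convex_orderPolytope (R : α → α → Prop) (D : Finset α) : Convex ℝ (orderPolytope R D) := by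
  intro t ht t' ht' a b ha hb hab
  refine ⟨fun x hx => ?_, fun x hx => ?_, fun x y hxy => ?_⟩
  · simp [ht.1 x hx, ht'.1 x hx]
  · exact convex_Icc 0 1 (ht.2.1 x hx) (ht'.2.1 x hx) ha hb hab
  · exact add_le_add (mul_le_mul_of_nonneg_left (ht.2.2 hxy) ha)
      (mul_le_mul_of_nonneg_left (ht'.2.2 hxy) hb)

lemma exists_natCast_eq_of_mem_orderPolytope {t : α → ℝ} (ht : t ∈ orderPolytope R D)
    (hint : ∀ x, ∃ z : ℤ, (z : ℝ) = m * t x) :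
    ∃ s ∈ antitoneFillings R D (m + 1), ∀ x, (s x : ℝ) = m * t x := by
  have hnat (x) : ∃ k : ℕ, (k : ℝ) = m * t x := by
    obtain ⟨z, hz⟩ := hint x
    have hnonneg : 0 ≤ t x := by
      by_cases hx : x ∈ D
      · exact (ht.2.1 x hx).1
      · exact (ht.1 x hx).ge
    have hz0 : (0 : ℝ) ≤ z := hz ▸ mul_nonneg m.cast_nonneg hnonneg
    exact ⟨z.toNat, by rw [← hz]; exact_mod_cast Int.toNat_of_nonneg (by exact_mod_cast hz0)⟩
  choose s hs using hnat
  refine ⟨s, ⟨fun x hx => ?_, fun x hx => ?_, fun x y hxy => ?_⟩, hs⟩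
  · simpa [ht.1 x hx] using hs x
  · have hle : (s x : ℝ) ≤ m := hs x ▸ mul_le_of_le_one_right m.cast_nonneg (ht.2.1 x hx).2
    exact Nat.lt_succ_of_le (by exact_mod_cast hle)
  · have hle : (s y : ℝ) ≤ s x := by
      rw [hs, hs]
      exact mul_le_mul_of_nonneg_left (ht.2.2 hxy) m.cast_nonneg
    exact_mod_cast hle

/-- The superlevel set `{x | k < t x}` of a filling, as a filling by zeros and ones. -/
def layer (t : α → ℕ) (k : ℕ) (x : α) : ℕ := if k < t x then 1 else 0

lemma layer_mem_antitoneFillings {t : α → ℕ} (ht : t ∈ antitoneFillings R D m) (k : ℕ) :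
    layer t k ∈ antitoneFillings R D 2 := by
  refine ⟨fun x hx => ?_, fun x _ => ?_, fun x y hxy => ?_⟩
  · simp [layer, ht.1 x hx]
  · unfold layer
    split_ifs <;> simp
  · have := ht.2.2 hxy
    unfold layer
    split_ifs <;> omega

lemma sum_layer {t : α → ℕ} (ht : t ∈ antitoneFillings R D (m + 1)) (x : α) :
    ∑ k ∈ Finset.range m, layer t k x = t x := by
  have hle : t x ≤ m := by
    by_cases hx : x ∈ D
    · exact Nat.lt_succ_iff.1 (ht.2.1 x hx)
    · simp [ht.1 x hx]
  have hfilter : {k ∈ Finset.range m | k < t x} = Finset.range (t x) := by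
    ext k
    simp only [Finset.mem_filter, Finset.mem_range]
    omega
  simp [layer, hfilter]

lemma map_eq_sum_layer {t : α → ℕ} (ht : t ∈ antitoneFillings R D (m + 1)) :
    M (m, fun x => (t x : ℝ)) = ∑ k ∈ Finset.range m, M (1, fun x => (layer t k x : ℝ)) := by
  rw [← map_sum]
  congr 1
  ext x
  · simp [Prod.fst_sum]
  · simp [Prod.snd_sum, ← sum_layer ht x]

namespace IsLatticeModel

lemma injOn (hM : IsLatticeModel R D V M) (a : ℝ) :
    Set.InjOn (fun t : α → ℕ => M (a, fun x => (t x : ℝ))) (antitoneFillings R D m) := by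
  intro t ht t' ht' h
  have hdiff : M (0, fun x => (t x : ℝ) - t' x) = 0 := by
    rw [← sub_eq_zero.2 h, ← map_sub, Prod.mk_sub_mk, sub_self]
    rfl
  funext x
  have hx := hM.mem_of_apply_mem ⊥ 0 (zero_mem _) (fun x => (t x : ℝ) - t' x)
    (fun x hx => by simp [ht.1 x hx, ht'.1 x hx]) (fun p => by simp [hdiff]) x
  exact_mod_cast sub_eq_zero.1 (AddSubgroup.mem_bot.1 hx)

lemma exists_filling_of_mem (hM : IsLatticeModel R D V M) {x : X → ℤ}
    (hx : (fun p => (x p : ℝ)) ∈ (m : ℝ) • convexHull ℝ V) :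
    ∃ t ∈ antitoneFillings R D (m + 1), M (m, fun y => (t y : ℝ)) = fun p => (x p : ℝ) := by
  have hhull : convexHull ℝ V ⊆ (fun t => M (1, t)) '' orderPolytope R D := by
    refine convexHull_min ?_ ?_
    · rw [← hM.image_eq]
      rintro _ ⟨t, ht, rfl⟩
      exact ⟨_, cast_mem_orderPolytope ht, rfl⟩
    · have himage := ((convex_singleton 1).prod (convex_orderPolytope R D)).linear_image M
      rwa [Set.singleton_prod, Set.image_image] at himage
  obtain ⟨v, hv, hvx⟩ := hx
  obtain ⟨t, ht, rfl⟩ := hhull hv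
  have hMt : M (m, fun y => m * t y) = fun p => (x p : ℝ) := by
    rw [← hvx]
    simp only [← map_smul, Prod.smul_mk, smul_eq_mul, mul_one]
    rfl
  have hint := hM.mem_of_apply_mem (Int.castAddHom ℝ).range m ⟨m, by simp⟩ (fun y => m * t y)
    (fun y hy => by simp [ht.1 y hy]) (fun p => ⟨x p, by simp [hMt]⟩)
  obtain ⟨s, hs, hst⟩ := exists_natCast_eq_of_mem_orderPolytope ht hint
  exact ⟨s, hs, by simp only [hst, hMt]⟩

lemma exists_mem_of_filling (hM : IsLatticeModel R D V M) (hm : 0 < m) {t : α → ℕ}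
    (ht : t ∈ antitoneFillings R D (m + 1)) : ∃ x : X → ℤ,
      (fun p => (x p : ℝ)) ∈ (m : ℝ) • convexHull ℝ V ∧
      M (m, fun y => (t y : ℝ)) = fun p => (x p : ℝ) := by
  have hm' : (m : ℝ) ≠ 0 := by positivity
  have hV (k) : M (1, fun x => (layer t k x : ℝ)) ∈ V :=
    hM.image_eq ▸ Set.mem_image_of_mem _ (layer_mem_antitoneFillings ht k)
  choose z hz using fun p k => hM.integral _ (hV k) p
  have hMz : M (m, fun y => (t y : ℝ)) =
      fun p => ((∑ k ∈ Finset.range m, z p k : ℤ) : ℝ) := by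
    funext p
    simp [map_eq_sum_layer ht, hz]
  refine ⟨_, ?_, hMz⟩
  rw [← hMz, map_eq_sum_layer ht, Set.mem_smul_set_iff_inv_smul_mem₀ hm', Finset.smul_sum]
  exact (convex_convexHull ℝ V).sum_mem (fun _ _ => by positivity) (by simp [hm'])
    fun k _ => subset_convexHull ℝ V (hV k)

lemma ncard_lattice_points (hM : IsLatticeModel R D V M) (hm : 0 < m) :
    {x : X → ℤ | (fun p => (x p : ℝ)) ∈ (m : ℝ) • convexHull ℝ V}.ncard =
      (antitoneFillings R D (m + 1)).ncard := by
  have hcast : Function.Injective fun (x : X → ℤ) (p : X) => (x p : ℝ) :=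
    fun x y h => funext fun p => Int.cast_injective (congrFun h p)
  rw [← (hM.injOn m).ncard_image, ← Set.ncard_image_of_injective _ hcast]
  congr 1
  ext y
  constructor
  · rintro ⟨x, hx, rfl⟩
    exact hM.exists_filling_of_mem hx
  · rintro ⟨t, ht, rfl⟩
    obtain ⟨x, hx, hMx⟩ := hM.exists_mem_of_filling hm ht
    exact ⟨x, hx, hMx.symm⟩

lemma tendsto_ncard_lattice_points [DecidableEq α] [Std.Irrefl R] (hM : IsLatticeModel R D V M)
    (hD : IsOrderIdeal R D) {w : Finset α → ℝ} (hw : IsOrderVolume R D w) :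
    Tendsto (fun m : ℕ =>
      ({x : X → ℤ | (fun p => (x p : ℝ)) ∈ (m : ℝ) • convexHull ℝ V}.ncard : ℝ) /
        (m : ℝ) ^ D.card) atTop (𝓝 (w D)) := by
  refine (hw.tendsto_ncard_antitoneFillings_succ hD).congr' ?_
  filter_upwards [eventually_gt_atTop 0] with m hm
  rw [hM.ncard_lattice_points hm]

end IsLatticeModel

end LatticePoints

section Staircase

variable {n : ℕ} {R : ℕ × ℕ → ℕ × ℕ → Prop} {I : Finset (ℕ × ℕ)}

/-- The staircase shape with rows of lengths `n - 1, n - 2, …, 0`; a cell is a pair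
`(row, column)`. -/
def staircase (n : ℕ) : Finset (ℕ × ℕ) :=
  {x ∈ Finset.range n ×ˢ Finset.range n | x.1 + x.2 + 1 < n}

/-- The cover relation of the shifted staircase: row `c + 1` is indented by one cell. -/
def ShiftedCover (x y : ℕ × ℕ) : Prop :=
  (y.1 = x.1 ∧ y.2 = x.2 + 1) ∨ (y.1 = x.1 + 1 ∧ x.2 = y.2 + 1)

/-- The cover relation of the ordinary staircase: rows are left-justified. -/
def StraightCover (x y : ℕ × ℕ) : Prop :=
  (y.1 = x.1 ∧ y.2 = x.2 + 1) ∨ (y.1 = x.1 + 1 ∧ x.2 = y.2)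

/-- The number of cells of `I` in row `c`. -/
def rowLen (I : Finset (ℕ × ℕ)) (c : ℕ) : ℕ := Finset.card {x ∈ I | x.1 = c}

instance : Std.Irrefl ShiftedCover := ⟨fun x => by unfold ShiftedCover; omega⟩

instance : Std.Irrefl StraightCover := ⟨fun x => by unfold StraightCover; omega⟩

@[simp]
lemma mem_staircase {x : ℕ × ℕ} : x ∈ staircase n ↔ x.1 + x.2 + 1 < n := by
  simp only [staircase, Finset.mem_filter, Finset.mem_product, Finset.mem_range]
  omega

lemma isOrderIdeal_shiftedCover_staircase (n : ℕ) : IsOrderIdeal ShiftedCover (staircase n) := by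
  intro x y h
  simp only [mem_staircase]
  unfold ShiftedCover at h
  omega

lemma isOrderIdeal_straightCover_staircase (n : ℕ) :
    IsOrderIdeal StraightCover (staircase n) := by
  intro x y h
  simp only [mem_staircase]
  unfold StraightCover at h
  omega

lemma mem_iff_lt_card_of_isLowerSet {S : Finset ℕ} (hS : IsLowerSet (S : Set ℕ)) {j : ℕ} :
    j ∈ S ↔ j < S.card := by
  have hsub : S ⊆ Finset.range S.card := fun j hj => by
    have hle : Finset.range (j + 1) ⊆ S := fun i hi =>
      hS (Nat.lt_succ_iff.1 (Finset.mem_range.1 hi)) hj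
    simpa using Finset.card_le_card hle
  rw [← Finset.mem_range, ← Finset.eq_of_subset_of_card_le hsub (by simp)]

lemma lt_count_iff {p : ℕ → Prop} [DecidablePred p] {k : ℕ}
    (hp : ∀ i j, i ≤ j → j < k → p j → p i) {j : ℕ} : j < Nat.count p k ↔ j < k ∧ p j := by
  rw [Nat.count_eq_card_filter_range, ← mem_iff_lt_card_of_isLowerSet]
  · simp
  · intro b a hab hb
    simp only [Finset.coe_filter, Finset.mem_range, Set.mem_ofPred_eq] at hb ⊢
    exact ⟨hab.trans_lt hb.1, hp a b hab hb.1 hb.2⟩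

lemma lt_rowLen_iff (hI : ∀ c s, (c, s + 1) ∈ I → (c, s) ∈ I) {c s : ℕ} :
    s < rowLen I c ↔ (c, s) ∈ I := by
  have hcard : ({x ∈ I | x.1 = c}.image Prod.snd).card = rowLen I c :=
    Finset.card_image_of_injOn fun x hx y hy h => by
      simp only [Finset.coe_filter, Set.mem_ofPred_eq] at hx hy
      exact Prod.ext (hx.2.trans hy.2.symm) h
  have hmem {s} : s ∈ {x ∈ I | x.1 = c}.image Prod.snd ↔ (c, s) ∈ I := by simp
  rw [← hcard, ← mem_iff_lt_card_of_isLowerSet, hmem]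
  intro b a hab
  rw [Finset.mem_coe, Finset.mem_coe, hmem, hmem]
  induction hab with
  | refl => exact id
  | step _ ih => exact fun h => ih (hI _ _ h)

lemma rowLen_erase {x : ℕ × ℕ} (hx : x ∈ I) :
    rowLen (I.erase x) = Function.update (rowLen I) x.1 (rowLen I x.1 - 1) := by
  funext c
  rw [rowLen, Finset.filter_erase]
  by_cases h : c = x.1
  · subst h
    rw [Function.update_self, Finset.card_erase_of_mem (by simp [hx]), rowLen]
  · rw [Function.update_of_ne h, Finset.erase_eq_of_notMem (by simp [Ne.symm h]), rowLen]

@[simp]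
lemma rowLen_empty (c : ℕ) : rowLen ∅ c = 0 := rfl

lemma card_eq_sum_rowLen (hI : I ⊆ staircase n) : I.card = ∑ c ∈ Finset.range n, rowLen I c :=
  Finset.card_eq_sum_card_fiberwise fun x hx => by
    have := mem_staircase.1 (hI hx)
    simp only [Finset.coe_range, Set.mem_Iio]
    omega

lemma rowLen_staircase (n c : ℕ) : rowLen (staircase n) c = n - 1 - c := by
  have hrow (s) : s < rowLen (staircase n) c ↔ c + s + 1 < n := by
    rw [lt_rowLen_iff fun c s => by simp only [mem_staircase]; omega, mem_staircase]
  refine eq_of_forall_lt_iff fun s => (hrow s).trans ?_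
  omega

lemma card_staircase (n : ℕ) : (staircase n).card = n.choose 2 := by
  simp only [card_eq_sum_rowLen subset_rfl, rowLen_staircase]
  rw [Nat.choose_two_right, ← Finset.sum_range_id]
  exact Finset.sum_range_reflect id n

/-- A maximal cell is the last cell of its row, so that summing over them is summing over rows. -/
lemma sum_maximalCells (hR : ∀ c s, R (c, s) (c, s + 1)) (hI : I ⊆ staircase n)
    (hideal : IsOrderIdeal R I) {φ : ℕ → ℝ}
    (hφ : ∀ c < n, rowLen I c = 0 ∨ (c, rowLen I c - 1) ∉ maximalCells R I → φ c = 0) :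
    ∑ x ∈ maximalCells R I, φ x.1 = ∑ c ∈ Finset.range n, φ c := by
  have hrow {c s} : s < rowLen I c ↔ (c, s) ∈ I := lt_rowLen_iff fun c s => @hideal _ _ (hR c s)
  have hcorner {x} (hx : x ∈ maximalCells R I) : x.2 + 1 = rowLen I x.1 := by
    rw [mem_maximalCells] at hx
    have hmem : x.2 < rowLen I x.1 := hrow.2 hx.1
    have hnext : ¬ x.2 + 1 < rowLen I x.1 := fun h => hx.2 _ (hrow.1 h) (hR x.1 x.2)
    omega
  have hinj : Set.InjOn Prod.fst (maximalCells R I : Set (ℕ × ℕ)) := fun x hx y hy h => by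
    have := hcorner hx
    have := hcorner hy
    exact Prod.ext h (by rw [h] at *; omega)
  rw [← Finset.sum_image hinj]
  refine Finset.sum_subset (fun c hc => ?_) fun c hc hnot => hφ c (Finset.mem_range.1 hc) ?_
  · obtain ⟨x, hx, rfl⟩ := Finset.mem_image.1 hc
    have := mem_staircase.1 (hI (mem_maximalCells.1 hx).1)
    exact Finset.mem_range.2 (by omega)
  · exact .inr fun h => hnot (Finset.mem_image.2 ⟨_, h, rfl⟩)

end Staircase

section ShiftedWeight

variable {ι : Type*} {s : Finset ι} {l : ι → ℕ}

/-- Compare the coefficients of `X ^ (|s| - 1)` in the Lagrange interpolation, at the nodes `y`, of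
`∏ (X - x d) - ∏ (X - y d)`. -/
lemma sum_prod_sub_div_prod_sub [DecidableEq ι] (x y : ι → ℝ) (hy : Set.InjOn y s) :
    ∑ c ∈ s, (∏ d ∈ s, (y c - x d)) / (∏ d ∈ s.erase c, (y c - y d)) =
      ∑ c ∈ s, (y c - x c) := by
  rcases s.eq_empty_or_nonempty with rfl | hne
  · simp
  open Polynomial in
  have hmonic (z : ι → ℝ) : (∏ d ∈ s, (X - C (z d)) : ℝ[X]).Monic :=
    monic_prod_of_monic _ _ fun i _ => monic_X_sub_C _
  open Polynomial in
  have hdegree (z : ι → ℝ) : (∏ d ∈ s, (X - C (z d)) : ℝ[X]).degree = s.card := by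
    simp [degree_prod]
  have hlt := Polynomial.degree_sub_lt_left ((hdegree x).trans (hdegree y).symm) (hmonic x).ne_zero
    (by rw [hmonic x, hmonic y])
  rw [hdegree x] at hlt
  have hcoeff := Lagrange.coeff_eq_sum hy hlt
  rw [Polynomial.coeff_sub, Polynomial.prod_X_sub_C_coeff_card_pred _ _ hne.card_pos,
    Polynomial.prod_X_sub_C_coeff_card_pred _ _ hne.card_pos, neg_sub_neg] at hcoeff
  rw [Finset.sum_sub_distrib, hcoeff]
  refine Finset.sum_congr rfl fun c hc => ?_
  simp only [Polynomial.eval_sub, Polynomial.eval_prod, Polynomial.eval_X, Polynomial.eval_C]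
  rw [Finset.prod_eq_zero (f := fun d => y c - y d) hc (sub_self _), sub_zero]

lemma injOn_mul_pred (hl : Set.InjOn l {c ∈ s | 0 < l c}) :
    Set.InjOn (fun c => (l c : ℝ) * (l c - 1)) ({c ∈ s | 0 < l c} : Finset ι) := by
  intro c hc d hd h
  rw [Finset.coe_filter] at hc hd
  have hfactor : ((l c : ℝ) - l d) * (l c + l d - 1) = 0 := by
    simp only at h
    linear_combination h
  have hadd : (l c : ℝ) + l d - 1 ≠ 0 := by
    have hc1 : (1 : ℝ) ≤ l c := by exact_mod_cast hc.2
    have hd1 : (1 : ℝ) ≤ l d := by exact_mod_cast hd.2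
    linarith
  refine hl hc hd ?_
  exact_mod_cast sub_eq_zero.1 ((mul_eq_zero.1 hfactor).resolve_right hadd)

variable [LinearOrder ι]

/-- The product of `κ a b` over the pairs `a < b` of `s`. -/
def pairProd (κ : ι → ι → ℝ) (s : Finset ι) : ℝ :=
  ∏ a ∈ s, ∏ b ∈ s, if a < b then κ a b else 1

/-- The kernel `|a - b| / (a + b)` of the product formula for shifted tableaux, with the value `1`
at the indeterminate pair `(0, 0)`, so that empty rows contribute nothing. -/
noncomputable def rowKernel (a b : ℕ) : ℝ := if a = 0 ∧ b = 0 then 1 else |(a : ℝ) - b| / (a + b)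

/-- Schur's product formula: the number of standard shifted tableaux with rows of lengths `l c`,
`c ∈ s`, divided by the factorial of the number of cells. -/
noncomputable def shiftedWeight (s : Finset ι) (l : ι → ℕ) : ℝ :=
  (∏ c ∈ s, ((l c).factorial : ℝ)⁻¹) * pairProd (fun a b => rowKernel (l a) (l b)) s

lemma pairProd_insert {κ : ι → ι → ℝ} (hκ : ∀ a b, κ a b = κ b a) {c : ι} (hc : c ∉ s) :
    pairProd κ (insert c s) = pairProd κ s * ∏ d ∈ s, κ c d := by
  simp only [pairProd, Finset.prod_insert hc, lt_irrefl, if_false, one_mul, Finset.prod_mul_distrib]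
  rw [← mul_assoc, ← Finset.prod_mul_distrib, mul_comm]
  congr 1
  refine Finset.prod_congr rfl fun d hd => ?_
  rcases lt_or_gt_of_ne (ne_of_mem_of_not_mem hd hc).symm with h | h
  · simp [h, h.not_gt]
  · simp [h, h.not_gt, hκ c d]

lemma rowKernel_comm (a b : ℕ) : rowKernel a b = rowKernel b a := by
  simp only [rowKernel, and_comm (a := a = 0), abs_sub_comm (a : ℝ), add_comm (a : ℝ)]

lemma rowKernel_zero_right (a : ℕ) : rowKernel a 0 = 1 := by
  by_cases h : a = 0 <;> simp [rowKernel, h]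

lemma rowKernel_of_pos {a : ℕ} (b : ℕ) (ha : 0 < a) :
    rowKernel a b = |(a : ℝ) - b| / (a + b) :=
  if_neg fun h => ha.ne' h.1

lemma rowKernel_pred {a b : ℕ} (ha : 0 < a) (hb : 0 < b) (hab : a ≠ b) :
    rowKernel (a - 1) b = rowKernel a b *
      (((a : ℝ) * (a - 1) - b * (b + 1)) / ((a : ℝ) * (a - 1) - b * (b - 1))) := by
  have ha' : (1 : ℝ) ≤ a := by exact_mod_cast ha
  have hb' : (0 : ℝ) < b := by exact_mod_cast hb
  have hsub : (a : ℝ) - b ≠ 0 := sub_ne_zero.2 (by exact_mod_cast hab)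
  have hadd : (a : ℝ) + b ≠ 0 := by positivity
  have hpred : (a : ℝ) - 1 + b ≠ 0 := by linarith
  have hnum : (a : ℝ) * (a - 1) - b * (b + 1) = (a - 1 - b) * (a + b) := by ring
  have hden : (a : ℝ) * (a - 1) - b * (b - 1) = (a - b) * (a - 1 + b) := by ring
  rw [rowKernel_comm (a - 1), rowKernel_of_pos _ hb, rowKernel_of_pos _ ha, Nat.cast_pred ha,
    abs_sub_comm, add_comm (b : ℝ), hnum, hden]
  rcases lt_or_gt_of_ne hab with h | h
  · have h' : (a : ℝ) < b := by exact_mod_cast h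
    rw [abs_of_neg (by linarith), abs_of_neg (by linarith)]
    field_simp
  · have h' : (b : ℝ) + 1 ≤ a := by exact_mod_cast h
    rw [abs_of_nonneg (by linarith), abs_of_nonneg (by linarith)]
    field_simp

lemma shiftedWeight_congr {l' : ι → ℕ} (h : ∀ c ∈ s, l c = l' c) :
    shiftedWeight s l = shiftedWeight s l' := by
  unfold shiftedWeight pairProd
  congr 1
  · exact Finset.prod_congr rfl fun c hc => by rw [h c hc]
  · exact Finset.prod_congr rfl fun a ha => Finset.prod_congr rfl fun b hb => by
      simp only [h a ha, h b hb]

lemma shiftedWeight_insert {c : ι} (hc : c ∉ s) : shiftedWeight (insert c s) l =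
    shiftedWeight s l * (((l c).factorial : ℝ)⁻¹ * ∏ d ∈ s, rowKernel (l c) (l d)) := by
  rw [shiftedWeight, Finset.prod_insert hc, pairProd_insert (fun a b => rowKernel_comm _ _) hc,
    shiftedWeight]
  ring

lemma shiftedWeight_map {κ : Type*} [LinearOrder κ] (s : Finset κ) (e : κ ↪o ι) :
    shiftedWeight (s.map e.toEmbedding) l = shiftedWeight s (l ∘ e) := by
  simp [shiftedWeight, pairProd]

lemma shiftedWeight_eq_zero {a b : ι} (ha : a ∈ s) (hb : b ∈ s) (hab : a < b) (h0 : 0 < l a)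
    (h : l a = l b) : shiftedWeight s l = 0 := by
  refine mul_eq_zero_of_right _ (Finset.prod_eq_zero ha (Finset.prod_eq_zero hb ?_))
  simp only [if_pos hab]
  rw [rowKernel_of_pos _ h0, h, sub_self, abs_zero, zero_div]

lemma shiftedWeight_update_pred (hl : Set.InjOn l {c ∈ s | 0 < l c}) {c : ι} (hc : c ∈ s)
    (h0 : 0 < l c) :
    shiftedWeight s (Function.update l c (l c - 1)) = shiftedWeight s l * (l c *
      ∏ d ∈ {d ∈ s | 0 < l d}.erase c, (((l c : ℝ) * (l c - 1) - l d * (l d + 1)) /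
        ((l c : ℝ) * (l c - 1) - l d * (l d - 1)))) := by
  have hne : ∀ d ∈ s.erase c, d ≠ c := fun d hd => Finset.ne_of_mem_erase hd
  have hfactorial : ((l c - 1).factorial : ℝ)⁻¹ = ((l c).factorial : ℝ)⁻¹ * l c := by
    rw [← Nat.mul_factorial_pred h0.ne']
    push_cast
    field_simp
  have hkernel : ∏ d ∈ s.erase c, rowKernel (l c - 1) (l d) =
      (∏ d ∈ s.erase c, rowKernel (l c) (l d)) *
      ∏ d ∈ {d ∈ s | 0 < l d}.erase c, (((l c : ℝ) * (l c - 1) - l d * (l d + 1)) /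
        ((l c : ℝ) * (l c - 1) - l d * (l d - 1))) := by
    rw [← Finset.filter_erase, Finset.prod_filter, ← Finset.prod_mul_distrib]
    refine Finset.prod_congr rfl fun d hd => ?_
    split_ifs with hd0
    · exact rowKernel_pred h0 hd0 fun h =>
        hne d hd (hl ⟨Finset.mem_of_mem_erase hd, hd0⟩ ⟨hc, h0⟩ h.symm)
    · simp [Nat.eq_zero_of_not_pos hd0, rowKernel_zero_right]
  have herase : shiftedWeight (s.erase c) (Function.update l c (l c - 1)) =
      shiftedWeight (s.erase c) l :=
    shiftedWeight_congr fun d hd => Function.update_of_ne (hne d hd) _ _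
  have hprod : ∏ d ∈ s.erase c, rowKernel (l c - 1) (Function.update l c (l c - 1) d) =
      ∏ d ∈ s.erase c, rowKernel (l c - 1) (l d) :=
    Finset.prod_congr rfl fun d hd => by rw [Function.update_of_ne (hne d hd)]
  rw [← Finset.insert_erase hc, shiftedWeight_insert (Finset.notMem_erase c s),
    shiftedWeight_insert (Finset.notMem_erase c s), Finset.insert_erase hc, Function.update_self,
    herase, hprod, hkernel, hfactorial]
  ring

lemma sum_shiftedWeight_update_pred (hl : Set.InjOn l {c ∈ s | 0 < l c}) :
    ∑ c ∈ s with 0 < l c, shiftedWeight s (Function.update l c (l c - 1)) =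
      ((∑ c ∈ s, l c : ℕ) : ℝ) * shiftedWeight s l := by
  set K : Finset ι := {c ∈ s | 0 < l c} with hK
  have hlagrange := sum_prod_sub_div_prod_sub (fun d => (l d : ℝ) * (l d + 1)) _ (injOn_mul_pred hl)
  rw [← hK] at hlagrange
  have hleft : ∑ c ∈ K, (∏ d ∈ K, ((l c : ℝ) * (l c - 1) - l d * (l d + 1))) /
      (∏ d ∈ K.erase c, ((l c : ℝ) * (l c - 1) - l d * (l d - 1))) =
      -2 * ∑ c ∈ K, ((l c : ℝ) * ∏ d ∈ K.erase c,
        (((l c : ℝ) * (l c - 1) - l d * (l d + 1)) /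
          ((l c : ℝ) * (l c - 1) - l d * (l d - 1)))) := by
    rw [Finset.mul_sum]
    refine Finset.sum_congr rfl fun c hc => ?_
    rw [← Finset.mul_prod_erase K _ hc, Finset.prod_div_distrib]
    ring
  have hright : ∑ c ∈ K, ((l c : ℝ) * (l c - 1) - l c * (l c + 1)) =
      -2 * ((∑ c ∈ s, l c : ℕ) : ℝ) := by
    have hfilter : ∑ c ∈ K, l c = ∑ c ∈ s, l c :=
      Finset.sum_filter_of_ne fun c _ h => Nat.pos_of_ne_zero h
    rw [← hfilter, Nat.cast_sum, Finset.mul_sum]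
    exact Finset.sum_congr rfl fun c _ => by ring
  rw [hleft, hright] at hlagrange
  rw [← mul_left_cancel₀ (by norm_num) hlagrange, mul_comm, Finset.mul_sum]
  refine Finset.sum_congr rfl fun c hc => ?_
  rw [hK, Finset.mem_filter] at hc
  exact shiftedWeight_update_pred hl hc.1 hc.2

lemma rowLen_lt_of_shiftedCover {I : Finset (ℕ × ℕ)} (hI : IsOrderIdeal ShiftedCover I) {c d : ℕ}
    (hcd : c < d) (hd : 0 < rowLen I d) : rowLen I d < rowLen I c := by
  have hrow {c s} : s < rowLen I c ↔ (c, s) ∈ I :=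
    lt_rowLen_iff fun c s => @hI (c, s) (c, s + 1) (.inl ⟨rfl, rfl⟩)
  have hstep {c} (hc : 0 < rowLen I (c + 1)) : rowLen I (c + 1) < rowLen I c :=
    hrow.2 (hI (.inr ⟨rfl, (Nat.sub_add_cancel hc).symm⟩) (hrow.1 (Nat.pred_lt hc.ne')))
  induction d, hcd using Nat.le_induction with
  | base => exact hstep hd
  | succ d _ ih => exact (hstep hd).trans (ih (hd.trans (hstep hd)))

/-- Shortening a row whose last cell is not maximal makes two rows equally long, and there
`shiftedWeight` vanishes. -/
lemma rowLen_succ_of_notMem_maximalCells {I : Finset (ℕ × ℕ)} (hI : IsOrderIdeal ShiftedCover I)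
    {c : ℕ} (hc : 0 < rowLen I c) (hnot : (c, rowLen I c - 1) ∉ maximalCells ShiftedCover I) :
    0 < rowLen I (c + 1) ∧ rowLen I (c + 1) = rowLen I c - 1 := by
  have hrow {c s} : s < rowLen I c ↔ (c, s) ∈ I :=
    lt_rowLen_iff fun c s => @hI (c, s) (c, s + 1) (.inl ⟨rfl, rfl⟩)
  rw [mem_maximalCells, ← hrow] at hnot
  push Not at hnot
  obtain ⟨⟨c', t⟩, hmem, ⟨h1, h2⟩ | ⟨h1, h2⟩⟩ := hnot (Nat.pred_lt hc.ne')
  all_goals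
    simp only at h1 h2
    subst h1
    rw [← hrow] at hmem
  · omega
  · have := rowLen_lt_of_shiftedCover hI (Nat.lt_add_one c) (Nat.zero_lt_of_lt hmem)
    omega

lemma isOrderVolume_shiftedWeight (n : ℕ) : IsOrderVolume ShiftedCover (staircase n)
    fun I => shiftedWeight (Finset.range n) (rowLen I) := by
  refine ⟨by simp [shiftedWeight, pairProd, rowKernel], fun I hIn hI => ?_⟩
  have hrow {c s} : s < rowLen I c ↔ (c, s) ∈ I :=
    lt_rowLen_iff fun c s => @hI (c, s) (c, s + 1) (.inl ⟨rfl, rfl⟩)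
  have hinj : Set.InjOn (rowLen I) {c ∈ Finset.range n | 0 < rowLen I c} := by
    intro c hc d hd h
    by_contra hne
    rcases lt_or_gt_of_ne hne with hlt | hlt
    · exact (rowLen_lt_of_shiftedCover hI hlt hd.2).ne h.symm
    · exact (rowLen_lt_of_shiftedCover hI hlt hc.2).ne h
  rw [card_eq_sum_rowLen hIn]
  refine (sum_shiftedWeight_update_pred hinj).symm.trans ?_
  rw [Finset.sum_filter, ← sum_maximalCells (fun c s => .inl ⟨rfl, rfl⟩) hIn hI]
  · refine Finset.sum_congr rfl fun x hx => ?_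
    have hmem := (mem_maximalCells.1 hx).1
    simp only [rowLen_erase hmem, if_pos (Nat.zero_lt_of_lt (hrow.2 hmem))]
  · intro c hc h
    split_ifs with h0
    · obtain ⟨hpos, hsucc⟩ := rowLen_succ_of_notMem_maximalCells hI h0 (h.resolve_left h0.ne')
      have hcn := mem_staircase.1 (hIn (hrow.1 hpos))
      refine shiftedWeight_eq_zero (a := c) (b := c + 1) (by simpa using hc) (by simp; omega)
        c.lt_succ_self ?_ ?_
      · rw [Function.update_self]
        omega
      · rw [Function.update_self, Function.update_of_ne (by omega), hsucc]
    · rfl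

lemma prod_rowKernel {n : ℕ} (hn : 0 < n) : ∏ d ∈ Finset.range n, rowKernel n d =
    n.factorial * (n - 1).factorial / (2 * n - 1).factorial := by
  have hterm : ∀ d ∈ Finset.range n, rowKernel n d = ((n - d : ℕ) : ℝ) / (n + d : ℕ) := by
    intro d hd
    have hd' := (Finset.mem_range.1 hd).le
    rw [rowKernel_of_pos d hn, abs_of_nonneg (sub_nonneg.2 (Nat.cast_le.2 hd')), Nat.cast_sub hd',
      Nat.cast_add]
  have hasc : ((n - 1).factorial : ℝ) * n.ascFactorial n = (2 * n - 1).factorial := by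
    rw [two_mul]
    exact_mod_cast Nat.factorial_mul_ascFactorial' n n hn
  rw [Finset.prod_congr rfl hterm, Finset.prod_div_distrib, ← Nat.cast_prod, ← Nat.cast_prod,
    ← Nat.descFactorial_eq_prod_range, ← Nat.ascFactorial_eq_prod_range, Nat.descFactorial_self,
    ← hasc]
  field_simp

lemma shiftedWeight_rowLen_staircase_succ (n : ℕ) :
    shiftedWeight (Finset.range (n + 1)) (rowLen (staircase (n + 1))) =
      shiftedWeight (Finset.range n) (rowLen (staircase n)) *
        ((n.factorial : ℝ)⁻¹ * ∏ d ∈ Finset.range n, rowKernel n d) := by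
  have hshift : shiftedWeight ((Finset.range n).map (addRightEmbedding 1))
      (rowLen (staircase (n + 1))) = shiftedWeight (Finset.range n) (rowLen (staircase n)) := by
    refine (shiftedWeight_map _ (OrderEmbedding.addRight 1)).trans
      (shiftedWeight_congr fun c _ => ?_)
    simp only [Function.comp_apply, OrderEmbedding.addRight_apply, rowLen_staircase]
    omega
  have hfirst : ∏ d ∈ (Finset.range n).map (addRightEmbedding 1),
      rowKernel (rowLen (staircase (n + 1)) 0) (rowLen (staircase (n + 1)) d) =
      ∏ d ∈ Finset.range n, rowKernel n d := by
    rw [Finset.prod_map, ← Finset.prod_range_reflect]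
    refine Finset.prod_congr rfl fun d hd => ?_
    rw [Finset.mem_range] at hd
    simp only [rowLen_staircase, addRightEmbedding_apply]
    congr 1
    omega
  have hrange : Finset.range (n + 1) = insert 0 ((Finset.range n).map (addRightEmbedding 1)) :=
    Finset.range_add_one' n
  rw [hrange, shiftedWeight_insert (by simp), hshift, hfirst, rowLen_staircase,
    Nat.add_sub_cancel, Nat.sub_zero]

lemma shiftedWeight_rowLen_staircase (n : ℕ) :
    shiftedWeight (Finset.range n) (rowLen (staircase n)) =
      (∏ i ∈ Finset.Icc 1 (n - 1), (Nat.factorial (i - 1) : ℝ)) /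
        (∏ i ∈ Finset.Icc 1 (n - 1), (Nat.factorial (2 * i - 1) : ℝ)) := by
  induction n with
  | zero => simp [shiftedWeight, pairProd]
  | succ n ih =>
    rw [shiftedWeight_rowLen_staircase_succ, ih, Nat.add_sub_cancel]
    rcases n with - | n
    · simp
    · rw [prod_rowKernel n.succ_pos, Finset.prod_Icc_succ_top (by omega),
        Finset.prod_Icc_succ_top (by omega), Nat.add_sub_cancel]
      field_simp

end ShiftedWeight

section AitkenDet

/-- The reciprocal factorial `1 / z!` of an integer, equal to `1 / Γ (z + 1)` and so `0` for
`z < 0`. -/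
noncomputable def invFactorial (z : ℤ) : ℝ := if 0 ≤ z then (z.toNat.factorial : ℝ)⁻¹ else 0

/-- Aitken's determinant: for a partition `l` with at most `n` parts, the number of standard
tableaux of shape `l` divided by the factorial of the number of cells. -/
noncomputable def aitkenDet (n : ℕ) (l : ℕ → ℤ) : ℝ :=
  Matrix.det (Matrix.of fun i j : Fin n => invFactorial (l i - i + j))

lemma invFactorial_of_neg {z : ℤ} (hz : z < 0) : invFactorial z = 0 := if_neg hz.not_ge

lemma invFactorial_natCast (k : ℕ) : invFactorial k = (k.factorial : ℝ)⁻¹ := by simp [invFactorial]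

lemma invFactorial_sub_one (z : ℤ) : invFactorial (z - 1) = z * invFactorial z := by
  rcases lt_or_ge z 0 with hz | hz
  · rw [invFactorial_of_neg hz, invFactorial_of_neg (by omega), mul_zero]
  lift z to ℕ using hz
  rcases z with - | k
  · simp [invFactorial_of_neg]
  · rw [Nat.cast_add_one, add_sub_cancel_right, ← Nat.cast_add_one, invFactorial_natCast,
      invFactorial_natCast, Nat.factorial_succ]
    push_cast
    field_simp

lemma invFactorial_sub_natCast (k j : ℕ) :
    invFactorial ((k : ℤ) - j) = (k.factorial : ℝ)⁻¹ * (descPochhammer ℝ j).eval (k : ℝ) := by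
  rw [descPochhammer_eval_eq_descFactorial]
  rcases le_or_gt j k with h | h
  · rw [← Nat.cast_sub h, invFactorial_natCast, ← Nat.factorial_mul_descFactorial h]
    have hpos : k.descFactorial j ≠ 0 := by
      rw [Ne, Nat.descFactorial_eq_zero_iff_lt]
      exact h.not_gt
    push_cast
    field_simp
  · rw [invFactorial_of_neg (by omega), Nat.descFactorial_of_lt h, Nat.cast_zero, mul_zero]

lemma sum_det_updateRow {ι S : Type*} [Fintype ι] [DecidableEq ι] [CommRing S] (M : Matrix ι ι S)
    (x y : ι → S) :
    ∑ c, (M.updateRow c fun j => (x c + y j) * M c j).det = (∑ c, (x c + y c)) * M.det := by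
  have hdet (N : Matrix ι ι S) : N.det =
      ∑ σ : Equiv.Perm ι, (Equiv.Perm.sign σ : S) * ∏ i, N i (σ i) := by
    rw [← Matrix.det_transpose, Matrix.det_apply']
    rfl
  have hterm (c : ι) (σ : Equiv.Perm ι) :
      ∏ i, M.updateRow c (fun j => (x c + y j) * M c j) i (σ i) =
        (x c + y (σ c)) * ∏ i, M i (σ i) := by
    rw [← Finset.mul_prod_erase _ _ (Finset.mem_univ c), Matrix.updateRow_self, mul_assoc,
      ← Finset.mul_prod_erase _ (fun i => M i (σ i)) (Finset.mem_univ c)]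
    congr 2
    exact Finset.prod_congr rfl fun i hi => by rw [Matrix.updateRow_ne (Finset.ne_of_mem_erase hi)]
  simp only [hdet, hterm]
  rw [Finset.sum_comm, Finset.mul_sum]
  refine Finset.sum_congr rfl fun σ _ => ?_
  rw [← Finset.mul_sum, ← Finset.sum_mul, Finset.sum_add_distrib, Finset.sum_add_distrib,
    Equiv.sum_comp σ y]
  ring

lemma sum_aitkenDet_update_pred (n : ℕ) (l : ℕ → ℤ) :
    ∑ c ∈ Finset.range n, aitkenDet n (Function.update l c (l c - 1)) =
      ((∑ c ∈ Finset.range n, l c : ℤ) : ℝ) * aitkenDet n l := by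
  have hrow (c : Fin n) : Matrix.of (fun i j : Fin n =>
      invFactorial (Function.update l c (l c - 1) i - i + j)) =
      (Matrix.of fun i j : Fin n => invFactorial (l i - i + j)).updateRow c fun j =>
        ((l c : ℝ) - c + j) * invFactorial (l c - c + j) := by
    ext i j
    by_cases h : i = c
    · subst h
      rw [Matrix.updateRow_self, Matrix.of_apply, Function.update_self,
        show l i - 1 - (i : ℤ) + j = l i - i + j - 1 by ring, invFactorial_sub_one]
      push_cast
      rfl
    · rw [Matrix.updateRow_ne h, Matrix.of_apply, Matrix.of_apply,
        Function.update_of_ne (Fin.val_ne_of_ne h)]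
  have hsum := sum_det_updateRow (Matrix.of fun i j : Fin n => invFactorial (l i - i + j))
    (fun c => (l c : ℝ) - c) (fun j => (j : ℝ))
  simp only [sub_add_cancel] at hsum
  rw [Finset.sum_range, Finset.sum_range, Int.cast_sum, aitkenDet, ← hsum]
  exact Finset.sum_congr rfl fun c _ => congrArg Matrix.det (hrow c)

lemma aitkenDet_zero (n : ℕ) : aitkenDet n (fun _ => 0) = 1 := by
  rw [aitkenDet, Matrix.det_of_isUpperTriangular]
  · simp [invFactorial]
  · exact fun i j hij => invFactorial_of_neg (by have : (j : ℕ) < i := hij; omega)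

lemma aitkenDet_eq_zero_of_succ {n c : ℕ} {l : ℕ → ℤ} (hc : c + 1 < n) (hl : l (c + 1) = l c + 1) :
    aitkenDet n l = 0 := by
  refine Matrix.det_zero_of_row_eq (i := ⟨c, by omega⟩) (j := ⟨c + 1, hc⟩) (by simp) ?_
  funext j
  simp only [Matrix.of_apply, hl]
  congr 1
  push_cast
  ring

lemma aitkenDet_eq_zero_of_neg {n : ℕ} {l : ℕ → ℤ} (hl : l n < 0) : aitkenDet (n + 1) l = 0 := by
  refine Matrix.det_eq_zero_of_row_eq_zero (Fin.last n) fun j => invFactorial_of_neg ?_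
  have := j.is_le
  rw [Fin.val_last]
  omega

lemma rowLen_succ_le_of_straightCover {I : Finset (ℕ × ℕ)} (hI : IsOrderIdeal StraightCover I)
    (c : ℕ) : rowLen I (c + 1) ≤ rowLen I c := by
  have hrow {c s} : s < rowLen I c ↔ (c, s) ∈ I :=
    lt_rowLen_iff fun c s => @hI (c, s) (c, s + 1) (.inl ⟨rfl, rfl⟩)
  exact le_of_forall_lt fun s hs =>
    hrow.2 (@hI (c, s) (c + 1, s) (.inr ⟨rfl, rfl⟩) (hrow.1 hs))

lemma rowLen_succ_eq_of_notMem_maximalCells {I : Finset (ℕ × ℕ)}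
    (hI : IsOrderIdeal StraightCover I) {c : ℕ}
    (hc : rowLen I c = 0 ∨ (c, rowLen I c - 1) ∉ maximalCells StraightCover I) :
    rowLen I (c + 1) = rowLen I c := by
  have hrow {c s} : s < rowLen I c ↔ (c, s) ∈ I :=
    lt_rowLen_iff fun c s => @hI (c, s) (c, s + 1) (.inl ⟨rfl, rfl⟩)
  have hle := rowLen_succ_le_of_straightCover hI c
  by_cases h0 : rowLen I c = 0
  · omega
  have hnot := hc.resolve_left h0
  rw [mem_maximalCells, ← hrow] at hnot
  push Not at hnot
  obtain ⟨⟨c', t⟩, hmem, ⟨h1, h2⟩ | ⟨h1, h2⟩⟩ := hnot (Nat.pred_lt h0)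
  all_goals
    simp only at h1 h2
    subst h1
    rw [← hrow] at hmem
    omega

lemma isOrderVolume_aitkenDet (n : ℕ) : IsOrderVolume StraightCover (staircase n)
    fun I => aitkenDet n fun c => rowLen I c := by
  refine ⟨by simpa using aitkenDet_zero n, fun I hIn hI => ?_⟩
  have hrow {c s} : s < rowLen I c ↔ (c, s) ∈ I :=
    lt_rowLen_iff fun c s => @hI (c, s) (c, s + 1) (.inl ⟨rfl, rfl⟩)
  have hsum := sum_aitkenDet_update_pred n fun c => rowLen I c
  rw [← Nat.cast_sum, ← card_eq_sum_rowLen hIn, Int.cast_natCast] at hsum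
  rw [← hsum, ← sum_maximalCells (fun c s => .inl ⟨rfl, rfl⟩) hIn hI]
  · refine Finset.sum_congr rfl fun x hx => congrArg (aitkenDet n) ?_
    have hmem := (mem_maximalCells.1 hx).1
    have hpos := Nat.zero_lt_of_lt (hrow.2 hmem)
    rw [rowLen_erase hmem, ← Nat.cast_pred hpos]
    exact (Function.comp_update (Nat.cast : ℕ → ℤ) _ _ _).symm
  · intro c hc h
    have hsucc := rowLen_succ_eq_of_notMem_maximalCells hI h
    rcases (Nat.succ_le_of_lt hc).lt_or_eq with hcn | rfl
    · refine aitkenDet_eq_zero_of_succ hcn ?_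
      rw [Function.update_self, Function.update_of_ne (by omega), hsucc, sub_add_cancel]
    · refine aitkenDet_eq_zero_of_neg ?_
      have hlast : ¬ 0 < rowLen I (c + 1) := fun h0 => by
        have := mem_staircase.1 (hIn (hrow.1 h0))
        omega
      rw [Function.update_self]
      omega

lemma det_vandermonde_two_mul (n : ℕ) :
    (Matrix.vandermonde fun i : Fin n => (2 * i : ℝ)).det =
      ∏ i ∈ Finset.range n, 2 ^ i * (i.factorial : ℝ) := by
  have hpow : Matrix.vandermonde (fun i : Fin n => (2 * i : ℝ)) = Matrix.of fun i j : Fin n =>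
      (2 : ℝ) ^ (j : ℕ) * Matrix.vandermonde (fun i : Fin n => (i : ℝ)) i j := by
    ext i j
    simp [mul_pow]
  rw [hpow, Matrix.det_mul_row, Finset.prod_mul_distrib, Finset.prod_range]
  rcases n with - | n
  · simp
  · rw [Matrix.det_vandermonde_id_eq_superFactorial, ← Nat.prod_range_succ_factorial, Nat.cast_prod]

/-- After reversing rows and columns the entries are `1 / (2 i - j)!`, a polynomial of degree `j` in
`2 i` up to a row factor. -/
lemma aitkenDet_rowLen_staircase_eq_prod (n : ℕ) :
    (aitkenDet n fun c => rowLen (staircase n) c) =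
      ∏ i ∈ Finset.range n, 2 ^ i * (i.factorial : ℝ) / (2 * i).factorial := by
  have hentry : Matrix.submatrix (Matrix.of fun i j : Fin n =>
      invFactorial ((rowLen (staircase n) i : ℤ) - i + j)) Fin.revPerm Fin.revPerm =
      Matrix.of fun i j : Fin n => ((2 * i : ℕ).factorial : ℝ)⁻¹ *
        (Matrix.of fun i j : Fin n => (descPochhammer ℝ j).eval (2 * i : ℝ)) i j := by
    ext i j
    simp only [Matrix.submatrix_apply, Matrix.of_apply, Fin.revPerm_apply, Fin.val_rev,
      rowLen_staircase]
    have h := invFactorial_sub_natCast (2 * i) j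
    push_cast at h
    rw [← h]
    congr 1
    omega
  rw [aitkenDet, ← Matrix.det_submatrix_equiv_self Fin.revPerm, hentry, Matrix.det_mul_column,
    ← Matrix.det_eval_matrixOfPolynomials_eq_det_vandermonde _ _
      (fun j : Fin n => descPochhammer_natDegree ℝ j) (fun j : Fin n => monic_descPochhammer ℝ j),
    det_vandermonde_two_mul, Finset.prod_div_distrib, ← Finset.prod_range
      (fun i => ((2 * i).factorial : ℝ)⁻¹), Finset.prod_inv_distrib]
  ring

lemma prod_odd_mul_two_pow_mul_factorial (n : ℕ) :
    (∏ i ∈ Finset.Icc 1 n, (2 * i - 1)) * (2 ^ n * n.factorial) = (2 * n).factorial := by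
  induction n with
  | zero => rfl
  | succ n ih =>
    rw [Finset.prod_Icc_succ_top (by omega), mul_add_one, Nat.factorial_succ, Nat.factorial_succ,
      Nat.factorial_succ, ← ih, pow_succ, show 2 * n + 2 - 1 = 2 * n + 1 by omega]
    ring

lemma aitkenDet_rowLen_staircase (n : ℕ) : (aitkenDet n fun c => rowLen (staircase n) c) =
    1 / ∏ i ∈ Finset.Icc 1 (n - 1), ((2 * i - 1 : ℕ) : ℝ) ^ (n - i) := by
  rw [aitkenDet_rowLen_staircase_eq_prod]
  induction n with
  | zero => simp
  | succ n ih =>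
    have hexp : ∏ i ∈ Finset.Icc 1 n, ((2 * i - 1 : ℕ) : ℝ) ^ (n + 1 - i) =
        (∏ i ∈ Finset.Icc 1 (n - 1), ((2 * i - 1 : ℕ) : ℝ) ^ (n - i)) *
          ((∏ i ∈ Finset.Icc 1 n, (2 * i - 1) : ℕ) : ℝ) := by
      have hlast : ∏ i ∈ Finset.Icc 1 (n - 1), ((2 * i - 1 : ℕ) : ℝ) ^ (n - i) =
          ∏ i ∈ Finset.Icc 1 n, ((2 * i - 1 : ℕ) : ℝ) ^ (n - i) := by
        refine Finset.prod_subset (Finset.Icc_subset_Icc_right (Nat.pred_le n)) fun i hi hni => ?_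
        rw [Finset.mem_Icc] at hi hni
        rw [show n - i = 0 by omega, pow_zero]
      rw [hlast, Nat.cast_prod, ← Finset.prod_mul_distrib]
      refine Finset.prod_congr rfl fun i hi => ?_
      rw [Nat.sub_add_comm (Finset.mem_Icc.1 hi).2, pow_succ]
    have hodd : ((∏ i ∈ Finset.Icc 1 n, (2 * i - 1) : ℕ) : ℝ) ≠ 0 := by
      rw [Nat.cast_ne_zero]
      exact Finset.prod_ne_zero_iff.2 fun i hi => by
        rw [Finset.mem_Icc] at hi
        omega
    rw [Finset.prod_range_succ, ih, Nat.add_sub_cancel, hexp,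
      ← prod_odd_mul_two_pow_mul_factorial]
    push_cast
    push_cast at hodd
    field_simp

end AitkenDet

section Patterns

variable {n : ℕ} {σ τ : Equiv.Perm (Fin n)}

lemma containsPattern_iff {π : Equiv.Perm (Fin 3)} :
    containsPattern σ π ↔ ∃ a b c, a < b ∧ b < c ∧ (σ a < σ b ↔ π 0 < π 1) ∧
      (σ a < σ c ↔ π 0 < π 2) ∧ (σ b < σ c ↔ π 1 < π 2) := by
  refine ⟨fun ⟨f, hf, h⟩ => ⟨f 0, f 1, f 2, hf (by decide), hf (by decide), h _ _, h _ _, h _ _⟩,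
    fun ⟨a, b, c, hab, hbc, h01, h02, h12⟩ => ⟨![a, b, c], ?_, ?_⟩⟩
  · intro i j hij
    fin_cases i <;> fin_cases j <;> simp_all [hab.trans hbc]
  · have hσab : σ a ≠ σ b := σ.injective.ne hab.ne
    have hσbc : σ b ≠ σ c := σ.injective.ne hbc.ne
    have hσac : σ a ≠ σ c := σ.injective.ne (hab.trans hbc).ne
    have hπ01 : π 0 ≠ π 1 := π.injective.ne (by decide)
    have hπ12 : π 1 ≠ π 2 := π.injective.ne (by decide)
    have hπ02 : π 0 ≠ π 2 := π.injective.ne (by decide)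
    intro i j
    fin_cases i <;> fin_cases j <;> simp <;> omega

lemma containsPattern_p123_iff :
    containsPattern σ p123 ↔ ∃ a b c, a < b ∧ b < c ∧ σ a < σ b ∧ σ b < σ c := by
  have h01 : p123 0 < p123 1 := by decide
  have h02 : p123 0 < p123 2 := by decide
  have h12 : p123 1 < p123 2 := by decide
  simp only [containsPattern_iff, h01, h02, h12, iff_true]
  grind

lemma containsPattern_p132_iff :
    containsPattern σ p132 ↔ ∃ a b c, a < b ∧ b < c ∧ σ a < σ c ∧ σ c < σ b := by
  have h01 : p132 0 < p132 1 := by decide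
  have h02 : p132 0 < p132 2 := by decide
  have h12 : ¬ p132 1 < p132 2 := by decide
  have hne {b c : Fin n} (hbc : b < c) : σ b ≠ σ c := σ.injective.ne hbc.ne
  simp only [containsPattern_iff, h01, h02, h12, iff_true, iff_false]
  grind

lemma containsPattern_p312_iff :
    containsPattern σ p312 ↔ ∃ a b c, a < b ∧ b < c ∧ σ b < σ c ∧ σ c < σ a := by
  have h01 : ¬ p312 0 < p312 1 := by decide
  have h02 : ¬ p312 0 < p312 2 := by decide
  have h12 : p312 1 < p312 2 := by decide
  have hne {b c : Fin n} (hbc : b < c) : σ b ≠ σ c := σ.injective.ne hbc.ne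
  simp only [containsPattern_iff, h01, h02, h12, iff_true, iff_false]
  grind

lemma exists_perm_val_eq {f : ℕ → ℕ} (hlt : ∀ k < n, f k < n)
    (hne : ∀ ⦃k l⦄, k < l → l < n → f k ≠ f l) :
    ∃ σ : Equiv.Perm (Fin n), ∀ k, (σ k : ℕ) = f k := by
  have hinj : Function.Injective fun k : Fin n => (⟨f k, hlt k k.2⟩ : Fin n) := by
    intro k l h
    have hf : f k = f l := congrArg Fin.val h
    rcases lt_trichotomy (k : ℕ) l with hkl | hkl | hkl
    · exact absurd hf (hne hkl l.2)
    · exact Fin.ext hkl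
    · exact absurd hf.symm (hne hkl k.2)
  exact ⟨Equiv.ofBijective _ (Finite.injective_iff_bijective.1 hinj), fun k => rfl⟩

lemma perm_eq_of_lt_iff (h : ∀ ⦃k l⦄, k < l → (σ k < σ l ↔ τ k < τ l)) : σ = τ := by
  have hmono : StrictMono (σ.symm.trans τ) := by
    intro x y hxy
    obtain ⟨k, rfl⟩ := σ.surjective x
    obtain ⟨l, rfl⟩ := σ.surjective y
    simp only [Equiv.trans_apply, Equiv.symm_apply_apply]
    rcases lt_trichotomy k l with hkl | rfl | hkl
    · exact (h hkl).1 hxy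
    · exact absurd hxy (lt_irrefl _)
    · exact lt_of_le_of_ne (not_lt.1 (mt (h hkl).2 hxy.not_gt)) (τ.injective.ne hkl.ne')
  have hid : hmono.orderIsoOfSurjective _ (Equiv.surjective _) = OrderIso.refl _ :=
    Subsingleton.elim _ _
  ext k
  simpa using congrArg Fin.val (DFunLike.congr_fun hid (σ k)).symm

lemma exists_intCast_eq_permMatrix (p : Fin n × Fin n) : ∃ z : ℤ, (z : ℝ) = permMatrix σ p :=
  ⟨if σ p.1 = p.2 then 1 else 0, by simp [permMatrix]⟩

end Patterns

section ColumnFilling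

/-- The filling by zeros and ones whose ones form the lowest `A s` cells of each column `s`. -/
def columnFilling (A : ℕ → ℕ) (x : ℕ × ℕ) : ℕ := if x.1 < A x.2 then 1 else 0

lemma columnFilling_lt_two (A : ℕ → ℕ) (x : ℕ × ℕ) : columnFilling A x < 2 := by
  unfold columnFilling
  split_ifs <;> norm_num

lemma exists_eq_columnFilling {n : ℕ} {t : ℕ × ℕ → ℕ} (hzero : ∀ x ∉ staircase n, t x = 0)
    (hlt : ∀ x ∈ staircase n, t x < 2) (hanti : ∀ c s, t (c + 1, s) ≤ t (c, s)) :
    ∃ A, t = columnFilling A := by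
  have hdown (s i j) (hij : i ≤ j) (_ : j < n) (hj : t (j, s) ≠ 0) : t (i, s) ≠ 0 := by
    have := antitone_nat_of_succ_le (f := fun c => t (c, s)) (fun c => hanti c s) hij
    grind
  refine ⟨fun s => Nat.count (fun c => t (c, s) ≠ 0) n, funext fun ⟨c, s⟩ => ?_⟩
  have hcount := lt_count_iff (j := c) (hdown s)
  simp only [columnFilling, hcount]
  by_cases hx : (c, s) ∈ staircase n
  · have := hlt _ hx
    rw [mem_staircase] at hx
    split_ifs <;> grind
  · simp [hzero _ hx]

end ColumnFilling

section Av132312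

variable {n : ℕ} {A : ℕ → ℕ} {σ : Equiv.Perm (Fin n)}

/-- The column heights of the order ideals of `ShiftedCover` in `staircase n`. -/
def IsShiftedProfile (n : ℕ) (A : ℕ → ℕ) : Prop :=
  ∀ i, A i ≤ n - 1 - i ∧ A (i + 1) ≤ A i ∧ A i ≤ A (i + 1) + 1

lemma columnFilling_mem_antitoneFillings_shiftedCover_iff :
    columnFilling A ∈ antitoneFillings ShiftedCover (staircase n) 2 ↔ IsShiftedProfile n A := by
  constructor
  · rintro ⟨hzero, -, hanti⟩ i
    have hbound := hzero (n - 1 - i, i) (by simp only [mem_staircase]; omega)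
    have hrow := hanti (x := (A i, i)) (y := (A i, i + 1)) (Or.inl ⟨rfl, rfl⟩)
    have hdiag := hanti (x := (A (i + 1), i + 1)) (y := (A (i + 1) + 1, i)) (Or.inr ⟨rfl, rfl⟩)
    simp only [columnFilling, ite_eq_right_iff] at hbound hrow hdiag
    grind
  · intro hA
    refine ⟨fun x hx => ?_, fun x _ => columnFilling_lt_two A x, fun x y hxy => ?_⟩
    · have := hA x.2
      simp only [mem_staircase, columnFilling] at hx ⊢
      grind
    · obtain ⟨c, i⟩ := x
      obtain ⟨d, j⟩ := y
      have := hA i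
      have := hA j
      simp only [ShiftedCover, columnFilling] at hxy ⊢
      grind

/-- The value at `k` of the permutation all of whose prefixes `σ 0, …, σ k` fill the interval
`[A k, A k + k]`. -/
def profileValue (A : ℕ → ℕ) : ℕ → ℕ
  | 0 => A 0
  | k + 1 => if A k = A (k + 1) + 1 then A (k + 1) else A (k + 1) + (k + 1)

lemma profileValue_succ (A : ℕ → ℕ) (k : ℕ) : profileValue A (k + 1) =
    if A k = A (k + 1) + 1 then A (k + 1) else A (k + 1) + (k + 1) := rfl

lemma profileValue_mem_Icc (hA : IsShiftedProfile n A) {l k : ℕ} (hlk : l ≤ k) :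
    profileValue A l ∈ Set.Icc (A k) (A k + k) := by
  induction k with
  | zero => simp [profileValue, Nat.le_zero.1 hlk]
  | succ k ih =>
    have := hA k
    simp only [Set.mem_Icc] at ih ⊢
    rcases hlk.lt_or_eq with hlk | rfl
    · have := ih (by omega)
      omega
    · rw [profileValue_succ]
      split_ifs <;> omega

lemma profileValue_lt_profileValue_succ_iff (hA : IsShiftedProfile n A) {l k : ℕ} (hlk : l ≤ k) :
    profileValue A l < profileValue A (k + 1) ↔ A k ≠ A (k + 1) + 1 := by
  obtain ⟨hlo, hhi⟩ := profileValue_mem_Icc hA hlk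
  have := hA k
  rw [profileValue_succ]
  split_ifs <;> omega

lemma profileValue_succ_lt_profileValue_iff (hA : IsShiftedProfile n A) {l k : ℕ} (hlk : l ≤ k) :
    profileValue A (k + 1) < profileValue A l ↔ A k = A (k + 1) + 1 := by
  obtain ⟨hlo, hhi⟩ := profileValue_mem_Icc hA hlk
  have := hA k
  rw [profileValue_succ]
  split_ifs <;> omega

lemma mem_Av132312_iff :
    σ ∈ Av132312 n ↔ ∀ k, (∀ l < k, σ l < σ k) ∨ ∀ l < k, σ k < σ l := by
  have hne {b c : Fin n} (hbc : b < c) : σ b ≠ σ c := σ.injective.ne hbc.ne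
  simp only [Av132312, Set.mem_ofPred_eq, containsPattern_p132_iff, containsPattern_p312_iff]
  constructor
  · rintro ⟨h132, h312⟩ k
    by_contra! ⟨⟨x, hxk, hx⟩, y, hyk, hy⟩
    grind
  · intro h
    constructor <;> grind

lemma exists_perm_eq_profileValue (hA : IsShiftedProfile n A) :
    ∃ σ : Equiv.Perm (Fin n), ∀ k, (σ k : ℕ) = profileValue A k := by
  refine exists_perm_val_eq (fun k hk => ?_) fun l k hlk _ => ?_
  · have := profileValue_mem_Icc hA le_rfl (k := k)
    have := hA k
    grind
  · obtain ⟨k, rfl⟩ := Nat.exists_eq_succ_of_ne_zero (Nat.ne_zero_of_lt hlk)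
    have := profileValue_lt_profileValue_succ_iff hA (Nat.le_of_lt_succ hlk)
    have := profileValue_succ_lt_profileValue_iff hA (Nat.le_of_lt_succ hlk)
    grind

lemma mem_Av132312_of_eq_profileValue (hA : IsShiftedProfile n A)
    (hσ : ∀ k, (σ k : ℕ) = profileValue A k) : σ ∈ Av132312 n := by
  refine mem_Av132312_iff.2 fun ⟨k, hk⟩ => ?_
  cases k with
  | zero => exact Or.inl fun l hl => absurd hl (Nat.not_lt_zero _)
  | succ k =>
    by_cases hstep : A k = A (k + 1) + 1
    · right
      intro l hl
      rw [Fin.lt_def, hσ, hσ]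
      exact (profileValue_succ_lt_profileValue_iff hA (Nat.le_of_lt_succ hl)).2 hstep
    · left
      intro l hl
      rw [Fin.lt_def, hσ, hσ]
      exact (profileValue_lt_profileValue_succ_iff hA (Nat.le_of_lt_succ hl)).2 hstep

lemma card_filter_Ico_eq {p : ℕ → Prop} [DecidablePred p] {i : ℕ} (hi : i < n) :
    ((Finset.Ico i n).filter p).card =
      ((Finset.Ico (i + 1) n).filter p).card + if p i then 1 else 0 := by
  rw [← Finset.insert_Ico_add_one_left_eq_Ico hi, Finset.filter_insert]
  split_ifs
  · exact Finset.card_insert_of_notMem (by simp)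
  · rfl

lemma exists_isShiftedProfile (n : ℕ) (p : ℕ → Prop) : ∃ A, IsShiftedProfile n A ∧
    ∀ k, k + 1 < n → (A k = A (k + 1) + 1 ↔ p (k + 1)) := by
  classical
  refine ⟨fun i => ((Finset.Ico (i + 1) n).filter p).card, fun i => ?_, fun k hk => ?_⟩
  · have hbound : ((Finset.Ico (i + 1) n).filter p).card ≤ n - (i + 1) :=
      (Finset.card_filter_le _ _).trans_eq (Nat.card_Ico _ _)
    refine ⟨hbound.trans_eq (by omega), ?_⟩
    by_cases hi : i + 1 < n
    · simp only [card_filter_Ico_eq hi]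
      split_ifs <;> omega
    · simp only [Finset.Ico_eq_empty_of_le (not_lt.1 hi),
        Finset.Ico_eq_empty_of_le (show n ≤ i + 1 + 1 by omega)]
      simp
  · simp only [card_filter_Ico_eq hk]
    split_ifs with hp <;> simp [hp]

lemma exists_isShiftedProfile_of_mem_Av132312 (hσ : σ ∈ Av132312 n) :
    ∃ A, IsShiftedProfile n A ∧ ∀ k, (σ k : ℕ) = profileValue A k := by
  obtain ⟨A, hA, hstep⟩ := exists_isShiftedProfile n
    fun k => ∃ hk : k < n, ∀ l < ⟨k, hk⟩, σ ⟨k, hk⟩ < σ l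
  obtain ⟨τ, hτ⟩ := exists_perm_eq_profileValue hA
  suffices σ = τ from ⟨A, hA, this ▸ hτ⟩
  refine perm_eq_of_lt_iff fun l ⟨k, hk⟩ hlk => ?_
  obtain ⟨k, rfl⟩ := Nat.exists_eq_succ_of_ne_zero (Nat.ne_zero_of_lt hlk)
  rw [Fin.lt_def (a := τ l), hτ, hτ,
    profileValue_lt_profileValue_succ_iff hA (Nat.le_of_lt_succ hlk), Ne, hstep k hk]
  rcases mem_Av132312_iff.1 hσ ⟨k + 1, hk⟩ with hmax | hmin
  · exact iff_of_true (hmax l hlk) fun ⟨_, hmin⟩ => (hmin l hlk).not_gt (hmax l hlk)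
  · exact iff_of_false (hmin l hlk).not_gt (not_not.2 ⟨hk, hmin⟩)

/-- The sum of the first `i` rows of the image of `(a, t)` under `shiftedModel`, at column `j`. -/
def prefixSum (u : ℝ × (ℕ × ℕ → ℝ)) : ℕ → ℕ → ℝ
  | 0, _ => 0
  | i + 1, j => (if i < j then u.2 (j - i - 1, i) else u.1) - u.2 (j, i)

/-- The homogenized linear parametrization of `B132312 n` by the order polytope of the shifted
staircase. -/
def shiftedModel (n : ℕ) : (ℝ × (ℕ × ℕ → ℝ)) →ₗ[ℝ] (Fin n × Fin n → ℝ) where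
  toFun u p := prefixSum u (p.1 + 1) p.2 - prefixSum u p.1 p.2
  map_add' u v := by
    have hadd (i j : ℕ) : prefixSum (u + v) i j = prefixSum u i j + prefixSum v i j := by
      cases i
      · simp [prefixSum]
      · simp only [prefixSum, Prod.fst_add, Prod.snd_add, Pi.add_apply]
        split_ifs <;> ring
    funext p
    simp only [hadd, Pi.add_apply]
    ring
  map_smul' c u := by
    have hsmul (i j : ℕ) : prefixSum (c • u) i j = c * prefixSum u i j := by
      cases i
      · simp [prefixSum]
      · simp only [prefixSum, Prod.smul_fst, Prod.smul_snd, Pi.smul_apply, smul_eq_mul]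
        split_ifs <;> ring
    funext p
    simp only [hsmul, Pi.smul_apply, smul_eq_mul, RingHom.id_apply]
    ring

lemma prefixSum_columnFilling (hA : IsShiftedProfile n A) (i j : ℕ) :
    prefixSum (1, fun x => (columnFilling A x : ℝ)) (i + 1) j =
      if j ∈ Set.Icc (A i) (A i + i) then 1 else 0 := by
  have := hA i
  simp only [prefixSum, columnFilling, Set.mem_Icc]
  split_ifs <;> first | (exfalso; omega) | norm_num

lemma shiftedModel_columnFilling (hA : IsShiftedProfile n A) (p : Fin n × Fin n) :
    shiftedModel n (1, fun x => (columnFilling A x : ℝ)) p =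
      if profileValue A p.1 = p.2 then 1 else 0 := by
  obtain ⟨⟨k, hk⟩, j⟩ := p
  change prefixSum _ (k + 1) j - prefixSum _ k j = _
  cases k with
  | zero =>
    rw [prefixSum_columnFilling hA]
    simp [prefixSum, profileValue, -Set.mem_Icc, eq_comm (a := A 0)]
  | succ k =>
    have := hA k
    rw [prefixSum_columnFilling hA, prefixSum_columnFilling hA]
    simp only [profileValue, Set.mem_Icc]
    split_ifs <;> first | (exfalso; omega) | norm_num

lemma mem_of_shiftedModel_apply_mem {G : AddSubgroup ℝ} {a : ℝ} {t : ℕ × ℕ → ℝ}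
    (hzero : ∀ x ∉ staircase n, t x = 0) (hmem : ∀ p, shiftedModel n (a, t) p ∈ G) (x : ℕ × ℕ) :
    t x ∈ G := by
  have hprefix (i j : ℕ) (hi : i ≤ n) (hj : j < n) : prefixSum (a, t) i j ∈ G := by
    induction i with
    | zero => exact G.zero_mem
    | succ i ih => simpa [shiftedModel] using G.add_mem (hmem (⟨i, hi⟩, ⟨j, hj⟩)) (ih (by omega))
  have hdown (d c i : ℕ) (hd : n ≤ c + i + d) : t (c, i) ∈ G := by
    induction d generalizing c with
    | zero => simp [hzero (c, i) (by simp only [mem_staircase]; omega)]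
    | succ d ih =>
      by_cases hx : (c, i) ∈ staircase n
      · have hlt : c + i + 1 < n := mem_staircase.1 hx
        have hsub := G.add_mem (hprefix (i + 1) (c + i + 1) (by omega) hlt)
          (ih (c + i + 1) (by omega))
        have hc : c + i + 1 - i - 1 = c := by omega
        simpa [prefixSum, hc, show i < c + i + 1 by omega] using hsub
      · simp [hzero _ hx]
  exact hdown n x.1 x.2 (by omega)

lemma isLatticeModel_shiftedModel (n : ℕ) :
    IsLatticeModel ShiftedCover (staircase n) (permMatrix '' Av132312 n) (shiftedModel n) where
  image_eq := by
    have himage {A : ℕ → ℕ} (hA : IsShiftedProfile n A) {σ : Equiv.Perm (Fin n)}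
        (hσ : ∀ k, (σ k : ℕ) = profileValue A k) :
        shiftedModel n (1, fun x => (columnFilling A x : ℝ)) = permMatrix σ := by
      funext p
      simp only [shiftedModel_columnFilling hA, permMatrix, Fin.ext_iff, hσ]
    apply Set.Subset.antisymm
    · rintro _ ⟨t, ht, rfl⟩
      have hcol (c s : ℕ) : t (c + 1, s) ≤ t (c, s) :=
        (ht.2.2 (x := (c, s + 1)) (Or.inr ⟨rfl, rfl⟩)).trans (ht.2.2 (Or.inl ⟨rfl, rfl⟩))
      obtain ⟨A, rfl⟩ := exists_eq_columnFilling ht.1 ht.2.1 hcol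
      have hA := columnFilling_mem_antitoneFillings_shiftedCover_iff.1 ht
      obtain ⟨σ, hσ⟩ := exists_perm_eq_profileValue hA
      exact ⟨σ, mem_Av132312_of_eq_profileValue hA hσ, (himage hA hσ).symm⟩
    · rintro _ ⟨σ, hσ, rfl⟩
      obtain ⟨A, hA, hσA⟩ := exists_isShiftedProfile_of_mem_Av132312 hσ
      exact ⟨columnFilling A, columnFilling_mem_antitoneFillings_shiftedCover_iff.2 hA,
        himage hA hσA⟩
  integral := by
    rintro _ ⟨σ, -, rfl⟩
    exact exists_intCast_eq_permMatrix
  mem_of_apply_mem := fun _ _ _ _ hzero hmem => mem_of_shiftedModel_apply_mem hzero hmem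

theorem tendsto_ncard_lattice_points_B132312 (n : ℕ) :
    Tendsto (fun m : ℕ => ({x : Fin n × Fin n → ℤ |
        (fun p => (x p : ℝ)) ∈ (m : ℝ) • B132312 n}.ncard : ℝ) / (m : ℝ) ^ n.choose 2) atTop
      (𝓝 ((∏ i ∈ Finset.Icc 1 (n - 1), ((i - 1).factorial : ℝ)) /
        ∏ i ∈ Finset.Icc 1 (n - 1), ((2 * i - 1).factorial : ℝ))) := by
  rw [← shiftedWeight_rowLen_staircase, ← card_staircase]
  exact (isLatticeModel_shiftedModel n).tendsto_ncard_lattice_points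
    (isOrderIdeal_shiftedCover_staircase n) (isOrderVolume_shiftedWeight n)

end Av132312

section AltAv123

variable {n k : ℕ} {Q : ℕ → ℕ} {σ τ : Equiv.Perm (Fin n)}

/-- The weakly increasing sequences below the diagonal; read from right to left, they are the column
heights of the order ideals of `StraightCover` in a staircase. -/
structure IsStraightProfile (Q : ℕ → ℕ) : Prop where
  le_self : ∀ i, Q i ≤ i
  monotone : Monotone Q

lemma columnFilling_mem_antitoneFillings_straightCover (hQ : IsStraightProfile Q) (k : ℕ) :
    columnFilling (fun s => Q (k - 1 - s)) ∈ antitoneFillings StraightCover (staircase k) 2 := by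
  refine ⟨fun ⟨c, s⟩ hx => ?_, fun x _ => columnFilling_lt_two _ x, fun ⟨c, s⟩ ⟨d, s'⟩ hxy => ?_⟩
  · have := hQ.le_self (k - 1 - s)
    simp only [mem_staircase, columnFilling] at hx ⊢
    grind
  · have := @hQ.monotone (k - 1 - s') (k - 1 - s)
    simp only [StraightCover, columnFilling] at hxy ⊢
    grind

lemma exists_isStraightProfile_of_mem_antitoneFillings {t : ℕ × ℕ → ℕ}
    (ht : t ∈ antitoneFillings StraightCover (staircase k) 2) :
    ∃ Q, IsStraightProfile Q ∧ t = columnFilling fun s => Q (k - 1 - s) := by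
  obtain ⟨A, rfl⟩ := exists_eq_columnFilling ht.1 ht.2.1 fun c s => ht.2.2 (Or.inr ⟨rfl, rfl⟩)
  obtain ⟨hzero, -, hanti⟩ := ht
  have hbound (s : ℕ) : A s ≤ k - 1 - s := by
    have := hzero (k - 1 - s, s) (by simp only [mem_staircase]; omega)
    simpa [columnFilling] using this
  have hA : Antitone A := antitone_nat_of_succ_le fun s => by
    have := hanti (x := (A s, s)) (y := (A s, s + 1)) (Or.inl ⟨rfl, rfl⟩)
    simp only [columnFilling] at this
    grind
  refine ⟨fun i => A (k - 1 - i), ⟨fun i => ?_, fun i j hij => hA (by omega)⟩, ?_⟩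
  · exact (hbound _).trans (by omega)
  · congr 1
    funext s
    rcases le_or_gt s (k - 1) with hs | hs
    · simp only [Nat.sub_sub_self hs]
    · dsimp only
      have := hbound s
      have := hbound (k - 1 - (k - 1 - s))
      omega

/-- The positions of the valleys of an alternating permutation of length `n`, counted from zero. For
odd `n` the last position is not a valley: it is treated as a peak. -/
abbrev IsValley (n p : ℕ) : Prop := p % 2 = 0 ∧ p + 1 < n

/-- The sequences of peaks and of valleys of `σ` decrease, and `Q i` is the number of valleys above
the `i`-th peak. The `i`-th peak and the `i`-th valley have positions `p` with `p / 2 = i`. -/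
structure HasProfile (σ : Equiv.Perm (Fin n)) (Q : ℕ → ℕ) : Prop where
  lt_of_same_type : ∀ ⦃p q : Fin n⦄, p < q → (IsValley n p ↔ IsValley n q) → σ q < σ p
  peak_lt_valley_iff : ∀ ⦃p q : Fin n⦄, ¬ IsValley n p → IsValley n q →
    (σ p < σ q ↔ (q : ℕ) / 2 < Q (p / 2))

lemma HasProfile.unique (hσ : HasProfile σ Q) (hτ : HasProfile τ Q) : σ = τ := by
  refine perm_eq_of_lt_iff fun p q hpq => ?_
  have hσne : σ p ≠ σ q := σ.injective.ne hpq.ne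
  have hτne : τ p ≠ τ q := τ.injective.ne hpq.ne
  by_cases hsame : IsValley n p ↔ IsValley n q
  · exact iff_of_false (hσ.lt_of_same_type hpq hsame).not_gt (hτ.lt_of_same_type hpq hsame).not_gt
  by_cases hp : IsValley n p
  · have hq : ¬ IsValley n q := fun hq => hsame (iff_of_true hp hq)
    have := hσ.peak_lt_valley_iff hq hp
    have := hτ.peak_lt_valley_iff hq hp
    omega
  · have hq : IsValley n q := by tauto
    rw [hσ.peak_lt_valley_iff hp hq, hτ.peak_lt_valley_iff hp hq]

lemma HasProfile.alternating (hσ : HasProfile σ Q) (hQ : IsStraightProfile Q) : Alternating σ := by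
  intro j hj
  have hne : σ ⟨j, by omega⟩ ≠ σ ⟨j + 1, hj⟩ := σ.injective.ne (by simp)
  constructor <;> intro hparity
  · have hvalley : IsValley n j := ⟨Nat.even_iff.1 hparity, hj⟩
    have hpeak : ¬ IsValley n (j + 1) := by grind
    have := hσ.peak_lt_valley_iff (p := ⟨j + 1, hj⟩) (q := ⟨j, by omega⟩) hpeak hvalley
    have := hQ.le_self ((j + 1) / 2)
    grind
  · have hpeak : ¬ IsValley n j := by grind
    by_cases hnext : IsValley n (j + 1)
    · have := hσ.peak_lt_valley_iff (p := ⟨j, by omega⟩) (q := ⟨j + 1, hj⟩) hpeak hnext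
      have := hQ.le_self (j / 2)
      grind
    · exact hσ.lt_of_same_type (Nat.lt_add_one j) (iff_of_false hpeak hnext)

lemma HasProfile.mem_AltAv123 (hσ : HasProfile σ Q) (hQ : IsStraightProfile Q) :
    σ ∈ AltAv123 n := by
  refine ⟨hσ.alternating hQ, fun h => ?_⟩
  obtain ⟨a, b, c, hab, hbc, hσab, hσbc⟩ := containsPattern_p123_iff.1 h
  have hdiff {p q : Fin n} (hpq : p < q) (hlt : σ p < σ q) : ¬ (IsValley n p ↔ IsValley n q) :=
    fun hsame => (hσ.lt_of_same_type hpq hsame).not_gt hlt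
  have := hdiff hab hσab
  have := hdiff hbc hσbc
  have := hdiff (hab.trans hbc) (hσab.trans hσbc)
  tauto

lemma lt_of_same_type_of_mem_AltAv123 (hσ : σ ∈ AltAv123 n) {p q : Fin n} (hpq : p < q)
    (hsame : IsValley n p ↔ IsValley n q) : σ q < σ p := by
  obtain ⟨halt, havoid⟩ := hσ
  rw [containsPattern_p123_iff] at havoid
  by_contra hlt
  replace hlt : σ p < σ q := lt_of_le_of_ne (not_lt.1 hlt) (σ.injective.ne hpq.ne)
  by_cases hq : IsValley n q
  · exact havoid ⟨p, q, ⟨q + 1, hq.2⟩, hpq, Nat.lt_add_one _, hlt,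
      (halt q hq.2).1 (Nat.even_iff.2 hq.1)⟩
  · have hp : ¬ IsValley n p := mt hsame.1 hq
    obtain ⟨j, hj⟩ : ∃ j, (p : ℕ) = j + 1 := Nat.exists_eq_succ_of_ne_zero (by grind)
    have hjn : j + 1 < n := hj ▸ p.2
    obtain rfl : p = ⟨j + 1, hjn⟩ := Fin.ext hj
    exact havoid ⟨⟨j, by omega⟩, ⟨j + 1, hjn⟩, q, Nat.lt_add_one j, hpq,
      (halt j hjn).1 (by grind), hlt⟩

lemma valley_lt_peak_of_mem_AltAv123 (hσ : σ ∈ AltAv123 n) {p q : Fin n} (hp : ¬ IsValley n p)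
    (hq : IsValley n q) (hpq : (p : ℕ) / 2 ≤ q / 2) : σ q < σ p := by
  have hnext : σ q < σ ⟨q + 1, hq.2⟩ := (hσ.1 q hq.2).1 (Nat.even_iff.2 hq.1)
  have hpeak : ¬ IsValley n (q + 1) := by grind
  rcases (show (p : ℕ) ≤ q + 1 by omega).lt_or_eq with hlt | heq
  · exact hnext.trans
      (lt_of_same_type_of_mem_AltAv123 hσ (Fin.lt_def.2 hlt) (iff_of_false hp hpeak))
  · rwa [show p = ⟨q + 1, hq.2⟩ from Fin.ext heq]

lemma exists_hasProfile_of_mem_AltAv123 (hσ : σ ∈ AltAv123 n) :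
    ∃ Q, IsStraightProfile Q ∧ HasProfile σ Q := by
  classical
  have hanti {p q : Fin n} (hsame : IsValley n p ↔ IsValley n q) (hpq : (p : ℕ) / 2 ≤ q / 2) :
      σ q ≤ σ p := by
    rcases lt_trichotomy p q with hlt | rfl | hgt
    · exact (lt_of_same_type_of_mem_AltAv123 hσ hlt hsame).le
    · exact le_rfl
    · grind
  -- Monotone in `i` and antitone in `j` by construction, even where peak `i` or valley `j` is
  -- missing.
  let P (i j : ℕ) : Prop := ∃ p q : Fin n, ¬ IsValley n p ∧ (p : ℕ) / 2 ≤ i ∧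
    IsValley n q ∧ j ≤ (q : ℕ) / 2 ∧ σ p < σ q
  have hcount (i j : ℕ) : j < Nat.count (P i) i ↔ j < i ∧ P i j :=
    lt_count_iff fun j j' hj _ ⟨p, q, hp, hpi, hq, hjq, hlt⟩ =>
      ⟨p, q, hp, hpi, hq, hj.trans hjq, hlt⟩
  refine ⟨fun i => Nat.count (P i) i, ⟨fun i => Nat.count_le _, fun i i' hi => ?_⟩,
    ⟨fun p q => lt_of_same_type_of_mem_AltAv123 hσ, fun p q hp hq => ?_⟩⟩
  · have hP (j : ℕ) : P i j → P i' j := fun ⟨p, q, hp, hpi, h⟩ => ⟨p, q, hp, hpi.trans hi, h⟩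
    exact (Nat.count_mono_left fun j _ => hP j).trans (Nat.count_monotone _ hi)
  · rw [hcount]
    constructor
    · intro hlt
      refine ⟨?_, p, q, hp, le_rfl, hq, le_rfl, hlt⟩
      by_contra! hle
      exact (valley_lt_peak_of_mem_AltAv123 hσ hp hq hle).not_gt hlt
    · rintro ⟨-, p', q', hp', hpp', hq', hqq', hlt⟩
      calc σ p ≤ σ p' := hanti (iff_of_false hp' hp) hpp'
        _ < σ q' := hlt
        _ ≤ σ q := hanti (iff_of_true hq hq') hqq'

/-- The number of the first `k` peaks lying above the `i`-th valley, when `Q` counts the valleys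
above each peak. -/
def peaksAbove (k : ℕ) (Q : ℕ → ℕ) (i : ℕ) : ℕ := Nat.count (fun j => Q j ≤ i) k

lemma lt_peaksAbove_iff (hQ : IsStraightProfile Q) {i j : ℕ} :
    j < peaksAbove k Q i ↔ j < k ∧ Q j ≤ i :=
  lt_count_iff fun _ _ hij _ h => (hQ.monotone hij).trans h

/-- The number of values above the value at `p` of the permutation with profile `Q`: its
complement `n - 1 - σ p`. -/
def depth (n k : ℕ) (Q : ℕ → ℕ) (p : ℕ) : ℕ :=
  p / 2 + if IsValley n p then peaksAbove k Q (p / 2) else Q (p / 2)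

lemma depth_lt_depth_of_same_type (hQ : IsStraightProfile Q) {p q : ℕ} (hpq : p < q) (hq : q < n)
    (hsame : IsValley n p ↔ IsValley n q) : depth n k Q p < depth n k Q q := by
  have hhalf : p / 2 < q / 2 := by grind
  have hpeaks : peaksAbove k Q (p / 2) ≤ peaksAbove k Q (q / 2) :=
    Nat.count_mono_left fun j _ hj => le_trans hj hhalf.le
  have := hQ.monotone hhalf.le
  simp only [depth, hsame]
  split_ifs <;> omega

lemma depth_valley_lt_depth_peak_iff (hk : k = (n + 1) / 2) (hQ : IsStraightProfile Q) {p q : ℕ}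
    (hpn : p < n) (hp : ¬ IsValley n p) (hq : IsValley n q) :
    depth n k Q q < depth n k Q p ↔ q / 2 < Q (p / 2) := by
  have := lt_peaksAbove_iff (k := k) hQ (i := q / 2) (j := p / 2)
  simp only [depth, if_neg hp, if_pos hq]
  omega

lemma depth_peak_lt_depth_valley_iff (hk : k = (n + 1) / 2) (hQ : IsStraightProfile Q) {p q : ℕ}
    (hpn : p < n) (hp : ¬ IsValley n p) (hq : IsValley n q) :
    depth n k Q p < depth n k Q q ↔ Q (p / 2) ≤ q / 2 := by
  have := lt_peaksAbove_iff (k := k) hQ (i := q / 2) (j := p / 2)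
  simp only [depth, if_neg hp, if_pos hq]
  omega

lemma depth_lt (hk : k = (n + 1) / 2) (hQ : IsStraightProfile Q) {p : ℕ} (hp : p < n) :
    depth n k Q p < n := by
  have hpeaks : peaksAbove k Q (p / 2) ≤ k := Nat.count_le _
  have := hQ.le_self (p / 2)
  unfold depth
  split_ifs <;> omega

lemma exists_perm_eq_depth (hk : k = (n + 1) / 2) (hQ : IsStraightProfile Q) :
    ∃ σ : Equiv.Perm (Fin n), ∀ p, (σ p : ℕ) = n - 1 - depth n k Q p := by
  refine exists_perm_val_eq (f := fun p => n - 1 - depth n k Q p) (fun p hp => by omega)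
    fun p q hpq hqn => ?_
  have hne {p q : ℕ} (hpn : p < n) (hp : ¬ IsValley n p) (hq : IsValley n q) :
      depth n k Q p ≠ depth n k Q q := by
    have := depth_valley_lt_depth_peak_iff hk hQ hpn hp hq
    have := depth_peak_lt_depth_valley_iff hk hQ hpn hp hq
    omega
  have hlt := depth_lt hk hQ (hpq.trans hqn)
  have hlt' := depth_lt hk hQ hqn
  suffices depth n k Q p ≠ depth n k Q q by omega
  by_cases hsame : IsValley n p ↔ IsValley n q
  · exact (depth_lt_depth_of_same_type hQ hpq hqn hsame).ne
  by_cases hp : IsValley n p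
  · exact (hne hqn (by tauto) hp).symm
  · exact hne (hpq.trans hqn) hp (by tauto)

lemma hasProfile_of_eq_depth (hk : k = (n + 1) / 2) (hQ : IsStraightProfile Q)
    (hσ : ∀ p, (σ p : ℕ) = n - 1 - depth n k Q p) : HasProfile σ Q := by
  have hlt (p q : Fin n) : σ p < σ q ↔ depth n k Q q < depth n k Q p := by
    have := depth_lt hk hQ p.2
    have := depth_lt hk hQ q.2
    rw [Fin.lt_def, hσ, hσ]
    omega
  refine ⟨fun p q hpq hsame => ?_, fun p q hp hq => ?_⟩
  · exact (hlt q p).2 (depth_lt_depth_of_same_type hQ hpq q.2 hsame)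
  · exact (hlt p q).trans (depth_valley_lt_depth_peak_iff hk hQ p.2 hp hq)

/-- The sum of the entries of row `p`, of the image of `u = (a, t)` under `straightModel`, that lie
at depth at least `p / 2 + z`. -/
def depthTail (n k : ℕ) (u : ℝ × (ℕ × ℕ → ℝ)) (p : ℕ) : ℕ → ℝ
  | 0 => u.1
  | z + 1 =>
    if IsValley n p then (if z < k then u.1 - u.2 (p / 2, k - 1 - z) else 0)
    else u.2 (z, k - 1 - p / 2)

/-- The homogenized linear parametrization of `Balt123 n` by the order polytope of the staircase,
where `k = (n + 1) / 2`. -/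
def straightModel (n k : ℕ) : (ℝ × (ℕ × ℕ → ℝ)) →ₗ[ℝ] (Fin n × Fin n → ℝ) where
  toFun u p := if n - 1 - p.2 < (p.1 : ℕ) / 2 then 0 else
    depthTail n k u p.1 (n - 1 - p.2 - p.1 / 2) - depthTail n k u p.1 (n - 1 - p.2 - p.1 / 2 + 1)
  map_add' u v := by
    have hadd (p z : ℕ) :
        depthTail n k (u + v) p z = depthTail n k u p z + depthTail n k v p z := by
      cases z
      · simp [depthTail]
      · simp only [depthTail, Prod.fst_add, Prod.snd_add, Pi.add_apply]
        split_ifs <;> ring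
    funext p
    simp only [hadd, Pi.add_apply]
    split_ifs <;> ring
  map_smul' c u := by
    have hsmul (p z : ℕ) : depthTail n k (c • u) p z = c * depthTail n k u p z := by
      cases z
      · simp [depthTail]
      · simp only [depthTail, Prod.smul_fst, Prod.smul_snd, Pi.smul_apply, smul_eq_mul]
        split_ifs <;> ring
    funext p
    simp only [hsmul, Pi.smul_apply, smul_eq_mul, RingHom.id_apply]
    split_ifs <;> ring

lemma depthTail_columnFilling (hk : k = (n + 1) / 2) (hQ : IsStraightProfile Q) {p : ℕ}
    (hp : p < n) (z : ℕ) :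
    depthTail n k (1, fun x => (columnFilling (fun s => Q (k - 1 - s)) x : ℝ)) p z =
      if p / 2 + z ≤ depth n k Q p then 1 else 0 := by
  cases z with
  | zero => simp [depthTail, depth]
  | succ z =>
    have hpeaks := lt_peaksAbove_iff (k := k) hQ (i := p / 2) (j := z)
    simp only [depthTail, depth, columnFilling, Nat.sub_sub_self (show p / 2 ≤ k - 1 by omega)]
    by_cases hz : z < k
    · simp only [Nat.sub_sub_self (show z ≤ k - 1 by omega)]
      split_ifs <;> first | (exfalso; omega) | norm_num
    · split_ifs <;> first | (exfalso; omega) | norm_num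

lemma straightModel_columnFilling (hk : k = (n + 1) / 2) (hQ : IsStraightProfile Q)
    (p : Fin n × Fin n) :
    straightModel n k (1, fun x => (columnFilling (fun s => Q (k - 1 - s)) x : ℝ)) p =
      if depth n k Q p.1 = n - 1 - p.2 then 1 else 0 := by
  have hle : (p.1 : ℕ) / 2 ≤ depth n k Q p.1 := Nat.le_add_right _ _
  simp only [straightModel, LinearMap.coe_mk, AddHom.coe_mk,
    depthTail_columnFilling hk hQ p.1.2]
  split_ifs <;> first | (exfalso; omega) | norm_num

lemma mem_of_straightModel_apply_mem (hk : k = (n + 1) / 2) {G : AddSubgroup ℝ} {a : ℝ}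
    (ha : a ∈ G) {t : ℕ × ℕ → ℝ} (hzero : ∀ x ∉ staircase k, t x = 0)
    (hmem : ∀ p, straightModel n k (a, t) p ∈ G) (x : ℕ × ℕ) : t x ∈ G := by
  have hpeak (i z : ℕ) (hi : i < k) (hz : z ≤ i) :
      depthTail n k (a, t) (min (2 * i + 1) (n - 1)) z ∈ G := by
    induction z with
    | zero => exact ha
    | succ z ih =>
      have hentry := hmem (⟨min (2 * i + 1) (n - 1), by omega⟩, ⟨n - 1 - (i + z), by omega⟩)
      simp only [straightModel, LinearMap.coe_mk, AddHom.coe_mk,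
        show min (2 * i + 1) (n - 1) / 2 = i by omega,
        show n - 1 - (n - 1 - (i + z)) = i + z by omega, Nat.add_sub_cancel_left,
        if_neg (show ¬ i + z < i by omega)] at hentry
      simpa using G.sub_mem (ih (by omega)) hentry
  obtain ⟨c, s⟩ := x
  by_cases hx : (c, s) ∈ staircase k
  · have hcs : c + s + 1 < k := mem_staircase.1 hx
    have := hpeak (k - 1 - s) (c + 1) (by omega) (by omega)
    rwa [depthTail, if_neg (by grind),
      show k - 1 - min (2 * (k - 1 - s) + 1) (n - 1) / 2 = s by omega] at this
  · exact hzero _ hx ▸ G.zero_mem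

lemma isLatticeModel_straightModel (hk : k = (n + 1) / 2) :
    IsLatticeModel StraightCover (staircase k) (permMatrix '' AltAv123 n) (straightModel n k) where
  image_eq := by
    have himage {Q : ℕ → ℕ} (hQ : IsStraightProfile Q) {σ : Equiv.Perm (Fin n)}
        (hσ : ∀ p, (σ p : ℕ) = n - 1 - depth n k Q p) :
        straightModel n k (1, fun x => (columnFilling (fun s => Q (k - 1 - s)) x : ℝ)) =
          permMatrix σ := by
      funext p
      have := depth_lt hk hQ p.1.2
      rw [straightModel_columnFilling hk hQ, permMatrix]
      refine if_congr ?_ rfl rfl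
      rw [Fin.ext_iff, hσ]
      omega
    apply Set.Subset.antisymm
    · rintro _ ⟨t, ht, rfl⟩
      obtain ⟨Q, hQ, rfl⟩ := exists_isStraightProfile_of_mem_antitoneFillings ht
      obtain ⟨σ, hσ⟩ := exists_perm_eq_depth hk hQ
      exact ⟨σ, (hasProfile_of_eq_depth hk hQ hσ).mem_AltAv123 hQ, (himage hQ hσ).symm⟩
    · rintro _ ⟨σ, hσ, rfl⟩
      obtain ⟨Q, hQ, hσQ⟩ := exists_hasProfile_of_mem_AltAv123 hσ
      obtain ⟨τ, hτ⟩ := exists_perm_eq_depth hk hQ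
      obtain rfl := hσQ.unique (hasProfile_of_eq_depth hk hQ hτ)
      exact ⟨_, columnFilling_mem_antitoneFillings_straightCover hQ k, himage hQ hτ⟩
  integral := by
    rintro _ ⟨σ, -, rfl⟩
    exact exists_intCast_eq_permMatrix
  mem_of_apply_mem := fun _ _ ha _ hzero hmem => mem_of_straightModel_apply_mem hk ha hzero hmem

theorem tendsto_ncard_lattice_points_Balt123 (n : ℕ) :
    Tendsto (fun m : ℕ => ({x : Fin n × Fin n → ℤ |
        (fun p => (x p : ℝ)) ∈ (m : ℝ) • Balt123 n}.ncard : ℝ) /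
          (m : ℝ) ^ ((n + 1) / 2).choose 2) atTop
      (𝓝 (1 / ∏ i ∈ Finset.Icc 1 ((n + 1) / 2 - 1),
        ((2 * i - 1 : ℕ) : ℝ) ^ ((n + 1) / 2 - i))) := by
  rw [← aitkenDet_rowLen_staircase, ← card_staircase]
  exact (isLatticeModel_straightModel rfl).tendsto_ncard_lattice_points
    (isOrderIdeal_straightCover_staircase _) (isOrderVolume_aitkenDet _)

end AltAv123

end AvoidingBirkhoff

theorem stmt19 (n : ℕ) (hn : 1 ≤ n) :
    Filter.Tendsto
      (fun m : ℕ =>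
        (Set.ncard {x : Fin n × Fin n → ℤ |
            (fun p => (x p : ℝ)) ∈ (m : ℝ) • B132312 n} : ℝ) / (m : ℝ) ^ (n.choose 2))
      Filter.atTop
      (nhds ((∏ i ∈ Finset.Icc 1 (n - 1), (Nat.factorial (i - 1) : ℝ)) /
        (∏ i ∈ Finset.Icc 1 (n - 1), (Nat.factorial (2 * i - 1) : ℝ)))) ∧
    Filter.Tendsto
      (fun m : ℕ =>
        (Set.ncard {x : Fin n × Fin n → ℤ |
            (fun p => (x p : ℝ)) ∈ (m : ℝ) • Balt123 n} : ℝ) /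
          (m : ℝ) ^ (((n + 1) / 2).choose 2))
      Filter.atTop
      (nhds (1 / ∏ i ∈ Finset.Icc 1 ((n + 1) / 2 - 1),
        ((2 * i - 1 : ℕ) : ℝ) ^ ((n + 1) / 2 - i))) :=
  ⟨AvoidingBirkhoff.tendsto_ncard_lattice_points_B132312 n,
    AvoidingBirkhoff.tendsto_ncard_lattice_points_Balt123 n⟩
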